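/- Let F be a real-valued real-analytic function on a neighborhood of 0 in ℂ³ × ℝ (variables (z₁, z₂, ζ, u)) of weighted order ≥ 4, meaning F(t²z₁, t z₂, t ζ, t³u)/t³ → 0 as t → 0 for every fixed (z₁, z₂, ζ, u) near 0 (weights [z₁] = 2, [z₂] = [ζ] = 1, [u] = 3). Let Γ = {(z₁, z₂, ζ, w) near 0 in ℂ⁴ : Im w = 2Re(z₁·conj(ζ)) + 2Re(z₂·conj(ζ)²) + F(z₁, z₂, ζ, Re w)}, and let ρ(z₁,z₂,ζ,w) = Im w − 2Re(z₁·conj(ζ)) − 2Re(z₂·conj(ζ)²) − F(z₁, z₂, ζ, Re w). Call a 4-tuple (f, g, h, e) of germs at 0 of holomorphic functions on ℂ⁴ tangent to Γ if for every point p ∈ Γ near 0 the real Fréchet derivative of ρ at p evaluated on the vector (f(p), g(p), h(p), e(p)) ∈ ℂ⁴ ≅ ℝ⁸ vanishes. Then the real vector space of tangent tuples has dimension at most 16, and its subspace of tuples with f(0) = g(0) = h(0) = e(0) = 0 has dimension at most 9. -/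

import Mathlib

open Complex ComplexConjugate Filter Topology

/-- Coordinates on `ℂ⁴`: `p 0, p 1` are `z₁, z₂`; `p 2` is `ζ`; `p 3` is `w`. -/
abbrev E4 : Type := Fin 4 → ℂ

/-- Defining function of the perturbed model hypersurface:
`ρ = Im w − 2 Re (z₁ ζ̄) − 2 Re (z₂ ζ̄²) − F (z₁, z₂, ζ, Re w)`. -/
noncomputable def rho (F : ℂ × ℂ × ℂ × ℝ → ℝ) (p : E4) : ℝ :=
  (p 3).im - 2 * (p 0 * conj (p 2)).re - 2 * (p 1 * (conj (p 2)) ^ 2).re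
    - F (p 0, p 1, p 2, (p 3).re)

/-- The hypersurface `Γ = {ρ = 0}`. -/
noncomputable def Gam (F : ℂ × ℂ × ℂ × ℝ → ℝ) : Set E4 := {p | rho F p = 0}

/-- Germs at `0 ∈ ℂ⁴` of complex-valued functions. -/
abbrev G4 : Type := Filter.Germ (𝓝 (0 : E4)) ℂ

/-- Germs at `0` of holomorphic 4-tuples `(f, g, h, e)` tangent to `Γ` near `0`:
at every point `p ∈ Γ` near `0`, the real Fréchet derivative of `ρ` at `p` kills the
vector `(f p, g p, h p, e p)`. -/
noncomputable def tangentGerms (F : ℂ × ℂ × ℂ × ℝ → ℝ) : Set (G4 × G4 × G4 × G4) :=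
  {t | ∃ f g h e : E4 → ℂ, t = (↑f, ↑g, ↑h, ↑e) ∧
    AnalyticAt ℂ f 0 ∧ AnalyticAt ℂ g 0 ∧ AnalyticAt ℂ h 0 ∧ AnalyticAt ℂ e 0 ∧
    ∀ᶠ p : E4 in 𝓝 0, p ∈ Gam F →
      fderiv ℝ (rho F) p ![f p, g p, h p, e p] = 0}

/-- As `tangentGerms`, with the extra requirement that the tuple vanishes at `0`. -/
noncomputable def tangentGerms0 (F : ℂ × ℂ × ℂ × ℝ → ℝ) : Set (G4 × G4 × G4 × G4) :=
  {t | ∃ f g h e : E4 → ℂ, t = (↑f, ↑g, ↑h, ↑e) ∧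
    f 0 = 0 ∧ g 0 = 0 ∧ h 0 = 0 ∧ e 0 = 0 ∧
    AnalyticAt ℂ f 0 ∧ AnalyticAt ℂ g 0 ∧ AnalyticAt ℂ h 0 ∧ AnalyticAt ℂ e 0 ∧
    ∀ᶠ p : E4 in 𝓝 0, p ∈ Gam F →
      fderiv ℝ (rho F) p ![f p, g p, h p, e p] = 0}


section Model

def Dif4 (f : ℂ → ℂ → ℂ → ℂ → ℂ) : Prop :=
  Differentiable ℂ (fun p : E4 => f (p 0) (p 1) (p 2) (p 3))

lemma Dif4.comp {f : ℂ → ℂ → ℂ → ℂ → ℂ} (hf : Dif4 f) {u v w x : ℂ → ℂ}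
    (hu : Differentiable ℂ u) (hv : Differentiable ℂ v) (hw : Differentiable ℂ w)
    (hx : Differentiable ℂ x) : Differentiable ℂ (fun s => f (u s) (v s) (w s) (x s)) := by
  have h : Differentiable ℂ (fun s : ℂ => (![u s, v s, w s, x s] : E4)) := by
    rw [differentiable_pi]
    intro i
    fin_cases i
    · exact hu
    · exact hv
    · exact hw
    · exact hx
  exact Differentiable.comp (g := fun p : E4 => f (p 0) (p 1) (p 2) (p 3)) hf h

structure Mdl (k : ℂ) (f g h e f' g' h' e' : ℂ → ℂ → ℂ → ℂ → ℂ) : Prop where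
  hk : k ≠ 0
  hf : Dif4 f
  hg : Dif4 g
  hh : Dif4 h
  he : Dif4 e
  hf' : Dif4 f'
  hg' : Dif4 g'
  hh' : Dif4 h'
  he' : Dif4 e'
  eq : ∀ z1 z2 y a b c t w, w = t + k * (z1 * c + z2 * c ^ 2 + a * y + b * y ^ 2) →
    e z1 z2 y w - e' a b c t = k * (f z1 z2 y w * c + f' a b c t * y + g z1 z2 y w * c ^ 2
      + g' a b c t * y ^ 2 + h z1 z2 y w * (a + 2 * y * b) + h' a b c t * (z1 + 2 * c * z2))

variable {k : ℂ} {f g h e f' g' h' e' : ℂ → ℂ → ℂ → ℂ → ℂ}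

lemma Mdl.swap (H : Mdl k f g h e f' g' h' e') : Mdl (-k) f' g' h' e' f g h e where
  hk := neg_ne_zero.2 H.hk
  hf := H.hf'
  hg := H.hg'
  hh := H.hh'
  he := H.he'
  hf' := H.hf
  hg' := H.hg
  hh' := H.hh
  he' := H.he
  eq := by
    intro z1 z2 y a b c t w hw
    have := H.eq a b c z1 z2 y w t (by rw [hw]; ring)
    linear_combination -this

lemma Mdl.e0 (H : Mdl k f g h e f' g' h' e') (t : ℂ) : e 0 0 0 t = e' 0 0 0 t := by
  have := H.eq 0 0 0 0 0 0 t t (by ring)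
  linear_combination this

lemma Mdl.eform (H : Mdl k f g h e f' g' h' e') (z1 z2 y t : ℂ) :
    e z1 z2 y t = e 0 0 0 t + k * (f' 0 0 0 t * y + g' 0 0 0 t * y ^ 2 + h' 0 0 0 t * z1) := by
  have := H.eq z1 z2 y 0 0 0 t t (by ring)
  rw [H.e0]
  linear_combination this

/-- derivative of `s * φ s` at zero -/
lemma deriv_mul_at_zero {φ : ℂ → ℂ} (hφ : Differentiable ℂ φ) :
    HasDerivAt (fun s => s * φ s) (φ 0) 0 := by
  have := (hasDerivAt_id (0:ℂ)).fun_mul (hφ 0).hasDerivAt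
  simpa using this

lemma hasDerivAt_lin {φ : ℂ → ℂ} (hφ : Differentiable ℂ φ) (t l : ℂ) :
    HasDerivAt (fun s => φ (t + s * l)) (l * deriv φ t) 0 := by
  have h1 : HasDerivAt (fun s : ℂ => t + s * l) l 0 := by
    simpa using ((hasDerivAt_id (0:ℂ)).mul_const l).const_add t
  have h2 : HasDerivAt φ (deriv φ t) (t + 0 * l) := by
    simpa using (hφ t).hasDerivAt
  have h3 := h2.comp (0:ℂ) h1
  rw [mul_comm] at h3
  exact h3

lemma Mdl.de (H : Mdl k f g h e f' g' h' e') : Differentiable ℂ (fun t => e 0 0 0 t) :=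
  H.he.comp (by fun_prop) (by fun_prop) (by fun_prop) (by fun_prop)
lemma Mdl.df (H : Mdl k f g h e f' g' h' e') : Differentiable ℂ (fun t => f 0 0 0 t) :=
  H.hf.comp (by fun_prop) (by fun_prop) (by fun_prop) (by fun_prop)
lemma Mdl.dg (H : Mdl k f g h e f' g' h' e') : Differentiable ℂ (fun t => g 0 0 0 t) :=
  H.hg.comp (by fun_prop) (by fun_prop) (by fun_prop) (by fun_prop)
lemma Mdl.dh (H : Mdl k f g h e f' g' h' e') : Differentiable ℂ (fun t => h 0 0 0 t) :=
  H.hh.comp (by fun_prop) (by fun_prop) (by fun_prop) (by fun_prop)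

lemma Mdl.aform (H : Mdl k f g h e f' g' h' e') (t : ℂ) : ∃ p q r : ℂ, ∀ z1 z2 y : ℂ,
    h z1 z2 y t = y * (deriv (fun t => e 0 0 0 t) t + k * (deriv (fun t => f' 0 0 0 t) t * y
      + deriv (fun t => g' 0 0 0 t) t * y ^ 2 + deriv (fun t => h' 0 0 0 t) t * z1))
      + h 0 0 0 t - p * y - q * y ^ 2 - r * z1 := by
  have d1 : Differentiable ℂ (fun a => f' a 0 0 t) :=
    H.hf'.comp (by fun_prop) (by fun_prop) (by fun_prop) (by fun_prop)
  have d2 : Differentiable ℂ (fun a => g' a 0 0 t) :=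
    H.hg'.comp (by fun_prop) (by fun_prop) (by fun_prop) (by fun_prop)
  have d3 : Differentiable ℂ (fun a => h' a 0 0 t) :=
    H.hh'.comp (by fun_prop) (by fun_prop) (by fun_prop) (by fun_prop)
  refine ⟨deriv (fun a => f' a 0 0 t) 0, deriv (fun a => g' a 0 0 t) 0,
    deriv (fun a => h' a 0 0 t) 0, fun z1 z2 y => ?_⟩
  have d4 : Differentiable ℂ (fun a => h z1 z2 y (t + a * (k * y))) :=
    H.hh.comp (by fun_prop) (by fun_prop) (by fun_prop) (by fun_prop)
  have key : ∀ a, a * h z1 z2 y (t + a * (k * y)) =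
      k⁻¹ * e 0 0 0 (t + a * (k * y)) + f' 0 0 0 (t + a * (k * y)) * y
        + g' 0 0 0 (t + a * (k * y)) * y ^ 2 + h' 0 0 0 (t + a * (k * y)) * z1
        - k⁻¹ * e 0 0 0 t + a * h 0 0 0 t - f' a 0 0 t * y - g' a 0 0 t * y ^ 2
        - h' a 0 0 t * z1 := by
    intro a
    have h1 := H.eq z1 z2 y a 0 0 t (t + a * (k * y)) (by ring)
    rw [H.eform, H.swap.eform a 0 0 t, ← H.e0 t] at h1
    have := H.hk
    generalize t + a * (k * y) = w at h1 ⊢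
    field_simp
    linear_combination -h1
  have D1 := deriv_mul_at_zero d4
  have D2 := ((((((((hasDerivAt_lin H.de t (k*y)).const_mul k⁻¹).add
    ((hasDerivAt_lin H.swap.df t (k*y)).mul_const y)).add
    ((hasDerivAt_lin H.swap.dg t (k*y)).mul_const (y^2))).add
    ((hasDerivAt_lin H.swap.dh t (k*y)).mul_const z1)).sub_const (k⁻¹ * e 0 0 0 t)).add
    ((hasDerivAt_id (0:ℂ)).mul_const (h 0 0 0 t))).sub ((d1 0).hasDerivAt.mul_const y)).sub
    ((d2 0).hasDerivAt.mul_const (y^2))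
  have D3 := D2.sub ((d3 0).hasDerivAt.mul_const z1)
  have := D1.unique (D3.congr_of_eventuallyEq (Eventually.of_forall key))
  have hk := H.hk
  simp only [zero_mul, add_zero] at this
  rw [this]
  field_simp
  ring

lemma Mdl.bform (H : Mdl k f g h e f' g' h' e') (t : ℂ) : ∃ p q r : ℂ, ∀ z1 z2 y : ℂ,
    2 * y * h z1 z2 y t = y ^ 2 * (deriv (fun t => e 0 0 0 t) t + k * (deriv (fun t => f' 0 0 0 t) t * y
      + deriv (fun t => g' 0 0 0 t) t * y ^ 2 + deriv (fun t => h' 0 0 0 t) t * z1))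
      - p * y - q * y ^ 2 - r * z1 := by
  have d1 : Differentiable ℂ (fun a => f' 0 a 0 t) :=
    H.hf'.comp (by fun_prop) (by fun_prop) (by fun_prop) (by fun_prop)
  have d2 : Differentiable ℂ (fun a => g' 0 a 0 t) :=
    H.hg'.comp (by fun_prop) (by fun_prop) (by fun_prop) (by fun_prop)
  have d3 : Differentiable ℂ (fun a => h' 0 a 0 t) :=
    H.hh'.comp (by fun_prop) (by fun_prop) (by fun_prop) (by fun_prop)
  refine ⟨deriv (fun a => f' 0 a 0 t) 0, deriv (fun a => g' 0 a 0 t) 0,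
    deriv (fun a => h' 0 a 0 t) 0, fun z1 z2 y => ?_⟩
  have d4 : Differentiable ℂ (fun a => 2 * y * h z1 z2 y (t + a * (k * y ^ 2))) :=
    (H.hh.comp (by fun_prop) (by fun_prop) (by fun_prop) (by fun_prop)).const_mul _
  have key : ∀ a, a * (2 * y * h z1 z2 y (t + a * (k * y ^ 2))) =
      k⁻¹ * e 0 0 0 (t + a * (k * y ^ 2)) + f' 0 0 0 (t + a * (k * y ^ 2)) * y
        + g' 0 0 0 (t + a * (k * y ^ 2)) * y ^ 2 + h' 0 0 0 (t + a * (k * y ^ 2)) * z1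
        - k⁻¹ * e 0 0 0 t - f' 0 a 0 t * y - g' 0 a 0 t * y ^ 2
        - h' 0 a 0 t * z1 := by
    intro a
    have h1 := H.eq z1 z2 y 0 a 0 t (t + a * (k * y ^ 2)) (by ring)
    rw [H.eform, H.swap.eform 0 a 0 t, ← H.e0 t] at h1
    have := H.hk
    generalize t + a * (k * y ^ 2) = w at h1 ⊢
    field_simp
    linear_combination -h1
  have D1 := deriv_mul_at_zero d4
  have D2 := (((((((hasDerivAt_lin H.de t (k*y^2)).const_mul k⁻¹).add
    ((hasDerivAt_lin H.swap.df t (k*y^2)).mul_const y)).add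
    ((hasDerivAt_lin H.swap.dg t (k*y^2)).mul_const (y^2))).add
    ((hasDerivAt_lin H.swap.dh t (k*y^2)).mul_const z1)).sub_const (k⁻¹ * e 0 0 0 t)).sub
     ((d1 0).hasDerivAt.mul_const y)).sub
    ((d2 0).hasDerivAt.mul_const (y^2))
  have D3 := D2.sub ((d3 0).hasDerivAt.mul_const z1)
  have := D1.unique (D3.congr_of_eventuallyEq (Eventually.of_forall key))
  have hk := H.hk
  simp only [zero_mul, add_zero] at this
  rw [this]
  field_simp
  ring

/-- Consequences: `g'₀`, `h'₀` have zero derivative, and shape of `h`. -/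
lemma Mdl.hform0 (H : Mdl k f g h e f' g' h' e') (t : ℂ) :
    deriv (fun t => g' 0 0 0 t) t = 0 ∧ deriv (fun t => h' 0 0 0 t) t = 0 ∧
    ∃ c : ℂ, ∀ z1 z2 y : ℂ, h z1 z2 y t = h 0 0 0 t + c * y
      + k / 2 * deriv (fun t => f' 0 0 0 t) t * y ^ 2 := by
  obtain ⟨p, q, r, hA⟩ := H.aform t
  obtain ⟨p', q', r', hB⟩ := H.bform t
  have hk := H.hk
  generalize deriv (fun t => e 0 0 0 t) t = E at *
  generalize deriv (fun t => f' 0 0 0 t) t = F at *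
  generalize deriv (fun t => g' 0 0 0 t) t = G at *
  generalize deriv (fun t => h' 0 0 0 t) t = K at *
  generalize h 0 0 0 t = h0 at *
  have hAB : ∀ z1 y : ℂ, 2 * y * (y * (E + k * (F * y + G * y ^ 2 + K * z1)) + h0 - p * y
      - q * y ^ 2 - r * z1) = y ^ 2 * (E + k * (F * y + G * y ^ 2 + K * z1))
        - p' * y - q' * y ^ 2 - r' * z1 := by
    intro z1 y
    rw [← hA z1 0 y]; exact hB z1 0 y
  have e1 := hAB 0 1
  have e2 := hAB 0 (-1)
  have e3 := hAB 0 2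
  have e4 := hAB 0 (-2)
  have e5 := hAB 1 1
  have e6 := hAB 1 (-1)
  have e7 := hAB 1 0
  have e8 := hAB 1 2
  have hG : G = 0 := by
    have : k * G = 0 := by linear_combination (e3 + e4 - 4 * e1 - 4 * e2) / 24
    simpa [hk] using this
  have hK : K = 0 := by
    have : k * K = 0 := by
      linear_combination (e5 - e1 + e6 - e2 - 2 * e7) / 2
    simpa [hk] using this
  subst hG hK
  have hq : q = k / 2 * F := by linear_combination -(e3 - e4 - 2 * e1 + 2 * e2) / 24
  have hr : r = 0 := by linear_combination -(e5 - e1 - (e6 - e2)) / 4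
  refine ⟨rfl, rfl, E - p, fun z1 z2 y => ?_⟩
  rw [hA z1 z2 y, hq, hr]
  ring

lemma const_of_deriv_zero {φ : ℂ → ℂ} (hφ : Differentiable ℂ φ) (h : ∀ t, deriv φ t = 0) (t : ℂ) :
    φ t = φ 0 := is_const_of_deriv_eq_zero hφ h t 0

lemma Mdl.g0c (H : Mdl k f g h e f' g' h' e') (t : ℂ) : g 0 0 0 t = g 0 0 0 0 :=
  const_of_deriv_zero H.dg (fun t => (H.swap.hform0 t).1) t

lemma Mdl.h0c (H : Mdl k f g h e f' g' h' e') (t : ℂ) : h 0 0 0 t = h 0 0 0 0 :=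
  const_of_deriv_zero H.dh (fun t => (H.swap.hform0 t).2.1) t

/-- the linear coefficient of `h` -/
noncomputable def hc (h : ℂ → ℂ → ℂ → ℂ → ℂ) (t : ℂ) : ℂ := (h 0 0 1 t - h 0 0 (-1) t) / 2

lemma Mdl.hform (H : Mdl k f g h e f' g' h' e') (z1 z2 y t : ℂ) :
    h z1 z2 y t = h 0 0 0 0 + hc h t * y + k / 2 * deriv (fun t => f' 0 0 0 t) t * y ^ 2 := by
  obtain ⟨-, -, c, hcc⟩ := H.hform0 t
  have : c = hc h t := by
    unfold hc
    rw [hcc 0 0 1, hcc 0 0 (-1)]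
    ring
  rw [hcc, this, H.h0c t]

lemma Mdl.fform0 (H : Mdl k f g h e f' g' h' e') (t : ℂ) : ∃ A B : ℂ, ∀ z1 z2 y : ℂ,
    f z1 z2 y t = z1 * (deriv (fun t => e 0 0 0 t) t + k * deriv (fun t => f' 0 0 0 t) t * y
      - hc h' t) + f 0 0 0 t - A * y - B * y ^ 2 - 2 * h' 0 0 0 0 * z2 := by
  have d1 : Differentiable ℂ (fun a => f' 0 0 a t) :=
    H.hf'.comp (by fun_prop) (by fun_prop) (by fun_prop) (by fun_prop)
  have d2 : Differentiable ℂ (fun a => g' 0 0 a t) :=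
    H.hg'.comp (by fun_prop) (by fun_prop) (by fun_prop) (by fun_prop)
  refine ⟨deriv (fun a => f' 0 0 a t) 0, deriv (fun a => g' 0 0 a t) 0, fun z1 z2 y => ?_⟩
  -- use the curve `w = t + c * (k * z1) + c^2 * (k * z2)`
  have dw : HasDerivAt (fun c : ℂ => t + c * (k * z1 + c * (k * z2))) (k * z1) 0 := by
    have : Differentiable ℂ (fun c : ℂ => k * z1 + c * (k * z2)) := by fun_prop
    simpa using (deriv_mul_at_zero this).const_add t
  have hE : HasDerivAt (fun c : ℂ => e 0 0 0 (t + c * (k * z1 + c * (k * z2))))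
      (deriv (fun t => e 0 0 0 t) t * (k * z1)) 0 := by
    have h2 : HasDerivAt (fun t => e 0 0 0 t) (deriv (fun t => e 0 0 0 t) t)
      (t + 0 * (k * z1 + 0 * (k * z2))) := by simpa using (H.de t).hasDerivAt
    exact h2.comp (0:ℂ) dw
  have hF : HasDerivAt (fun c : ℂ => f' 0 0 0 (t + c * (k * z1 + c * (k * z2))))
      (deriv (fun t => f' 0 0 0 t) t * (k * z1)) 0 := by
    have h2 : HasDerivAt (fun t => f' 0 0 0 t) (deriv (fun t => f' 0 0 0 t) t)
      (t + 0 * (k * z1 + 0 * (k * z2))) := by simpa using (H.swap.df t).hasDerivAt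
    exact h2.comp (0:ℂ) dw
  have d4 : Differentiable ℂ (fun c => f z1 z2 y (t + c * (k * z1 + c * (k * z2)))
      + c * g z1 z2 y (t + c * (k * z1 + c * (k * z2))) - f 0 0 0 t - c * g 0 0 0 0
      + (hc h' t - k / 2 * deriv (fun t => f 0 0 0 t) t * c) * (z1 + 2 * c * z2)
      + 2 * z2 * h' 0 0 0 0) := by
    have h5 := H.hf.comp (u := fun _ => z1) (v := fun _ => z2) (w := fun _ => y)
      (x := fun c => t + c * (k * z1 + c * (k * z2)))
      (by fun_prop) (by fun_prop) (by fun_prop) (by fun_prop)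
    have h6 := H.hg.comp (u := fun _ => z1) (v := fun _ => z2) (w := fun _ => y)
      (x := fun c => t + c * (k * z1 + c * (k * z2)))
      (by fun_prop) (by fun_prop) (by fun_prop) (by fun_prop)
    have h7 : ∀ (φ ψ : ℂ → ℂ) (_ : Differentiable ℂ φ) (_ : Differentiable ℂ ψ) (m n : ℂ),
        Differentiable ℂ (fun c => φ c + c * ψ c - f 0 0 0 t - c * g 0 0 0 0
      + (m - n * c) * (z1 + 2 * c * z2) + 2 * z2 * h' 0 0 0 0) := by
      intro φ ψ h1 h2 m n
      fun_prop
    exact h7 _ _ h5 h6 _ _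
  have key : ∀ c, c * (f z1 z2 y (t + c * (k * z1 + c * (k * z2)))
      + c * g z1 z2 y (t + c * (k * z1 + c * (k * z2))) - f 0 0 0 t - c * g 0 0 0 0
      + (hc h' t - k / 2 * deriv (fun t => f 0 0 0 t) t * c) * (z1 + 2 * c * z2)
      + 2 * z2 * h' 0 0 0 0) =
      k⁻¹ * e 0 0 0 (t + c * (k * z1 + c * (k * z2)))
        + f' 0 0 0 (t + c * (k * z1 + c * (k * z2))) * y
        + (g' 0 0 0 0 * y ^ 2 - k⁻¹ * e 0 0 0 t) - f' 0 0 c t * y - g' 0 0 c t * y ^ 2 := by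
    intro c
    have h1 := H.eq z1 z2 y 0 0 c t (t + c * (k * z1 + c * (k * z2))) (by ring)
    rw [H.eform, H.swap.eform 0 0 c t, ← H.e0 t, H.swap.hform 0 0 c t, H.g0c t, H.h0c t,
      H.swap.g0c, H.swap.h0c] at h1
    have := H.hk
    generalize t + c * (k * z1 + c * (k * z2)) = w at h1 ⊢
    field_simp
    linear_combination -2 * h1
  have D1 := deriv_mul_at_zero d4
  have D2 := ((((hE.const_mul k⁻¹).add (hF.mul_const y)).add_const
    (g' 0 0 0 0 * y ^ 2 - k⁻¹ * e 0 0 0 t)).sub ((d1 0).hasDerivAt.mul_const y)).sub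
    ((d2 0).hasDerivAt.mul_const (y^2))
  have := D1.unique (D2.congr_of_eventuallyEq (Eventually.of_forall key))
  have hk := H.hk
  simp only [zero_mul, mul_zero, add_zero, sub_zero] at this
  have h3 : f z1 z2 y t = f 0 0 0 t - hc h' t * z1 - 2 * z2 * h' 0 0 0 0
    + (k⁻¹ * (deriv (fun t => e 0 0 0 t) t * (k * z1)) +
        deriv (fun t => f' 0 0 0 t) t * (k * z1) * y - deriv (fun a => f' 0 0 a t) 0 * y -
      deriv (fun a => g' 0 0 a t) 0 * y ^ 2) := by linear_combination this
  rw [h3]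
  field_simp
  ring

/-- minus linear coefficient of `f` in `ζ`. -/
noncomputable def fA (f : ℂ → ℂ → ℂ → ℂ → ℂ) (t : ℂ) : ℂ := -(f 0 0 1 t - f 0 0 (-1) t) / 2
/-- minus quadratic coefficient of `f` in `ζ`. -/
noncomputable def fB (f : ℂ → ℂ → ℂ → ℂ → ℂ) (t : ℂ) : ℂ :=
  -(f 0 0 1 t + f 0 0 (-1) t - 2 * f 0 0 0 t) / 2

lemma Mdl.fform (H : Mdl k f g h e f' g' h' e') (z1 z2 y t : ℂ) :
    f z1 z2 y t = z1 * (deriv (fun t => e 0 0 0 t) t + k * deriv (fun t => f' 0 0 0 t) t * y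
      - hc h' t) + f 0 0 0 t - fA f t * y - fB f t * y ^ 2 - 2 * h' 0 0 0 0 * z2 := by
  obtain ⟨A, B, hh⟩ := H.fform0 t
  have hA : fA f t = A := by
    unfold fA; rw [hh 0 0 1, hh 0 0 (-1)]; ring
  have hB : fB f t = B := by
    unfold fB; rw [hh 0 0 1, hh 0 0 (-1)]; ring
  rw [hh, hA, hB]

/-- the parity argument -/
lemma Mdl.par (H : Mdl k f g h e f' g' h' e') (y w t : ℂ) :
    f 0 0 0 t = f 0 0 0 w - fA f w * y - fB f w * y ^ 2 - fA f' t * y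
      + y ^ 2 * (g' 0 0 1 t - g' 0 0 (-1) t) / 2 - (w - t) * deriv (fun t => f 0 0 0 t) t := by
  have hk := H.hk
  have h1 := H.eq 0 ((w - t) / k) y 0 0 1 t w (by field_simp; ring)
  have h2 := H.eq 0 ((w - t) / k) y 0 0 (-1) t w (by field_simp; ring)
  rw [H.eform, H.swap.eform 0 0 1 t, ← H.e0 t, H.swap.hform 0 0 1 t, H.fform 0 ((w - t) / k) y w, H.g0c t, H.h0c t,
      H.swap.g0c, H.swap.h0c, H.swap.fform 0 0 1] at h1
  rw [H.eform, H.swap.eform 0 0 (-1) t, ← H.e0 t, H.swap.hform 0 0 (-1) t, H.fform 0 ((w - t) / k) y w, H.g0c t,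
      H.h0c t, H.swap.g0c, H.swap.h0c, H.swap.fform 0 0 (-1)] at h2
  have e1 : (w - t) = k * ((w - t) / k) := by field_simp
  rw [e1]
  generalize (w - t) / k = z2 at *
  apply mul_left_cancel₀ (mul_ne_zero (two_ne_zero (α := ℂ)) hk)
  linear_combination h1 - h2

lemma Mdl.f0aff (H : Mdl k f g h e f' g' h' e') (w t : ℂ) :
    f 0 0 0 w = f 0 0 0 t + (w - t) * deriv (fun t => f 0 0 0 t) t := by
  linear_combination -H.par 0 w t

lemma Mdl.Aconst (H : Mdl k f g h e f' g' h' e') (w t : ℂ) : fA f w = -fA f' t := by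
  linear_combination (H.par 1 w t - H.par (-1) w t) / 2

lemma Mdl.Bconst (H : Mdl k f g h e f' g' h' e') (w t : ℂ) :
    fB f w = (g' 0 0 1 t - g' 0 0 (-1) t) / 2 := by
  linear_combination (H.par 1 w t + H.par (-1) w t - 2 * H.par 0 w t) / 2

lemma Mdl.phi (H : Mdl k f g h e f' g' h' e') (t : ℂ) :
    deriv (fun t => f 0 0 0 t) t = deriv (fun t => f 0 0 0 t) 0 := by
  have h1 := H.f0aff (t + 1) t
  have h2 := H.f0aff (t + 1) 0
  have h3 := H.f0aff t 0
  linear_combination h2 - h1 - h3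

/-- derivative of `f₀` -/
noncomputable def fP (f : ℂ → ℂ → ℂ → ℂ → ℂ) : ℂ := deriv (fun t => f 0 0 0 t) 0

lemma Mdl.f0 (H : Mdl k f g h e f' g' h' e') (t : ℂ) :
    f 0 0 0 t = f 0 0 0 0 + fP f * t := by
  have := H.f0aff t 0
  unfold fP
  linear_combination this

lemma Mdl.fform2 (H : Mdl k f g h e f' g' h' e') (z1 z2 y t : ℂ) :
    f z1 z2 y t = z1 * (deriv (fun t => e 0 0 0 t) t + k * fP f' * y
      - hc h' t) + (f 0 0 0 0 + fP f * t) - fA f 0 * y - fB f 0 * y ^ 2 - 2 * h' 0 0 0 0 * z2 := by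
  rw [H.fform, H.swap.phi t, H.f0 t, H.Aconst t 0, H.Aconst 0 0, H.Bconst t 0, H.Bconst 0 0]
  rfl

lemma Mdl.hform2 (H : Mdl k f g h e f' g' h' e') (z1 z2 y t : ℂ) :
    h z1 z2 y t = h 0 0 0 0 + hc h t * y + k / 2 * fP f' * y ^ 2 := by
  rw [H.hform, H.swap.phi t]
  rfl

lemma Mdl.eform2 (H : Mdl k f g h e f' g' h' e') (z1 z2 y t : ℂ) :
    e z1 z2 y t = e 0 0 0 t + k * ((f' 0 0 0 0 + fP f' * t) * y + g' 0 0 0 0 * y ^ 2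
      + h' 0 0 0 0 * z1) := by
  rw [H.eform, H.swap.f0 t, H.swap.g0c t, H.swap.h0c t]

/-- minus quadratic coefficient of `g`. -/
noncomputable def gM (g : ℂ → ℂ → ℂ → ℂ → ℂ) (t : ℂ) : ℂ :=
  -(g 0 0 1 t + g 0 0 (-1) t - 2 * g 0 0 0 0) / 2

lemma Mdl.gform0 (H : Mdl k f g h e f' g' h' e') (y t : ℂ) :
    g 0 0 y t = g 0 0 0 0 + fB f' 0 * y + y ^ 2 * (g' 0 0 0 0 + fB f 0 - g' 0 0 1 t) := by
  have hk := H.hk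
  have h1 := H.eq 0 0 y 0 0 1 t t (by ring)
  rw [H.eform2 0 0 y t, H.swap.eform2 0 0 1 t, ← H.e0 t, H.swap.hform2 0 0 1 t, H.fform2 0 0 y t,
    H.swap.fform2 0 0 1, H.swap.Aconst 0 0] at h1
  apply mul_left_cancel₀ hk
  linear_combination -h1

lemma Mdl.gform1 (H : Mdl k f g h e f' g' h' e') (y t : ℂ) :
    g 0 0 y t = g 0 0 0 0 + fB f' 0 * y - gM g t * y ^ 2 := by
  unfold gM
  rw [H.gform0 y, H.gform0 1, H.gform0 (-1)]
  ring

lemma Mdl.MM (H : Mdl k f g h e f' g' h' e') (t : ℂ) : gM g' t = - gM g t := by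
  have h1 := H.gform0 1 t
  have h2 := H.gform1 1 t
  have h3 := H.swap.gform1 1 t
  linear_combination h2 - h1 + h3

/-- slice `z₁ = a = b = 0`. -/
lemma Mdl.slice (H : Mdl k f g h e f' g' h' e') (z2 y c w t : ℂ) (hw : w - t = k * z2 * c ^ 2) :
    k * c ^ 2 * g 0 z2 y w = e 0 0 0 w - e 0 0 0 t + k * c ^ 2 * (k * fP f' * z2 * y + g 0 0 0 0
      + fB f' 0 * y - gM g t * y ^ 2 - 2 * z2 * hc h' t) := by
  have hk := H.hk
  have h1 := H.eq 0 z2 y 0 0 c t w (by linear_combination hw)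
  rw [H.eform2 0 z2 y w, H.swap.eform2 0 0 c t, ← H.e0 t, H.swap.hform2 0 0 c t, H.fform2 0 z2 y w,
    H.swap.fform2 0 0 c, H.swap.Aconst 0 0, H.swap.gform1 c t, H.MM] at h1
  linear_combination -h1 + (k * fP f' * y - k * fP f * c) * hw

lemma exists_sq (x : ℂ) : ∃ c : ℂ, c ^ 2 = x := IsAlgClosed.exists_pow_nat_eq x (by norm_num)

lemma Mdl.Mconst0 (H : Mdl k f g h e f' g' h' e') (w t : ℂ) (hwt : w ≠ t) :
    2 * gM g t = -(g 0 1 1 w + g 0 1 (-1) w - 2 * g 0 1 0 w) := by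
  have hk := H.hk
  obtain ⟨c, hc⟩ := exists_sq ((w - t) / k)
  have hw : w - t = k * 1 * c ^ 2 := by rw [hc]; field_simp
  have hc0 : k * c ^ 2 ≠ 0 := by
    have := sub_ne_zero.2 hwt
    rw [hw] at this
    simpa using this
  have h1 := H.slice 1 1 c w t hw
  have h2 := H.slice 1 (-1) c w t hw
  have h3 := H.slice 1 0 c w t hw
  apply mul_left_cancel₀ hc0
  linear_combination h1 + h2 - 2 * h3

lemma Mdl.Mconst (H : Mdl k f g h e f' g' h' e') (t : ℂ) : gM g t = gM g 0 := by
  by_cases ht : t = 1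
  · have h1 := H.Mconst0 2 t (by rw [ht]; norm_num)
    have h2 := H.Mconst0 2 0 (by norm_num)
    linear_combination (h1 - h2) / 2
  · have h1 := H.Mconst0 1 t (fun h => ht h.symm)
    have h2 := H.Mconst0 1 0 (by norm_num)
    linear_combination (h1 - h2) / 2

lemma Mdl.ek (H : Mdl k f g h e f' g' h' e') (w t : ℂ) :
    e 0 0 0 w - e 0 0 0 t = (w - t) * (g 0 1 0 w - g 0 0 0 0 + 2 * hc h' t) := by
  have hk := H.hk
  obtain ⟨c, hc'⟩ := exists_sq ((w - t) / k)
  have hw : w - t = k * 1 * c ^ 2 := by rw [hc']; field_simp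
  have h3 := H.slice 1 0 c w t hw
  rw [hw]
  linear_combination -h3

/-- `C'` is affine and `e₀` is quadratic. -/
lemma Mdl.quad (H : Mdl k f g h e f' g' h' e') : ∃ d : ℂ,
    (∀ w, hc h' w = hc h' 0 + w * (hc h' 1 - hc h' 0)) ∧
    (∀ w, e 0 0 0 w = e 0 0 0 0 + w * (2 * w * (hc h' 1 - hc h' 0) + d)) := by
  have hk : ∀ w t, w ≠ t → g 0 1 0 w - 2 * hc h' w = g 0 1 0 t - 2 * hc h' t := by
    intro w t hwt
    apply mul_left_cancel₀ (sub_ne_zero.2 hwt)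
    linear_combination -H.ek w t - H.ek t w
  have hk1 : ∀ w, g 0 1 0 w = g 0 1 0 0 - 2 * hc h' 0 + 2 * hc h' w := by
    intro w
    by_cases hw : w = 0
    · rw [hw]; ring
    · linear_combination hk w 0 hw
  have h1 : ∀ w, hc h' w = hc h' 0 + w * (hc h' 1 - hc h' 0) := by
    intro w
    have e1 := H.ek w 1
    have e2 := H.ek w 0
    have e3 := H.ek 1 0
    rw [hk1] at e1 e2 e3
    linear_combination (e1 - e2 + e3) / 2
  refine ⟨g 0 1 0 0 - g 0 0 0 0 + 2 * hc h' 0, h1, fun w => ?_⟩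
  have e2 := H.ek w 0
  rw [hk1] at e2
  rw [h1 w] at e2
  linear_combination e2

lemma Mdl.C1 (H : Mdl k f g h e f' g' h' e') : hc h' 1 = hc h' 0 := by
  obtain ⟨d, h1, h2⟩ := H.quad
  obtain ⟨d', h1', h2'⟩ := H.swap.quad
  have hk := H.hk
  have hCC : hc h 1 - hc h 0 = hc h' 1 - hc h' 0 := by
    have a1 := h2 1
    have a2 := h2 2
    have b1 := h2' 1
    have b2 := h2' 2
    rw [← H.e0, ← H.e0] at b1 b2
    linear_combination (a2 - 2 * a1 - (b2 - 2 * b1)) / 4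
  have hE := fun z2 a => H.eq 0 z2 1 a 0 1 0 (k * (z2 + a)) (by ring)
  simp only [fun z2 a => H.eform2 0 z2 1 (k * (z2 + a)), fun a => H.swap.eform2 a 0 1 0,
    ← H.e0 0, fun z2 a => H.fform2 0 z2 1 (k * (z2 + a)), fun a => H.swap.fform2 a 0 1 0,
    fun z2 a => H.hform2 0 z2 1 (k * (z2 + a)), fun a => H.swap.hform2 a 0 1 0] at hE
  have hg : ∀ z2 w, k * g 0 z2 1 w = e 0 0 0 w - e 0 0 0 (w - k * z2) + k *
      (k * fP f' * z2 + g 0 0 0 0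
      + fB f' 0 - gM g 0 - 2 * z2 * hc h' (w - k * z2)) := by
    intro z2 w
    have := H.slice z2 1 1 w (w - k * z2) (by ring)
    rw [H.Mconst] at this
    linear_combination this
  have e11 := hE 1 1
  have e10 := hE 1 0
  have e01 := hE 0 1
  have e00 := hE 0 0
  have g1 := fun w => hg 1 w
  have g0 := fun w => hg 0 w
  have h2'' := fun w => h2 w
  have x11 := hg 1 (k * (1 + 1))
  have x10 := hg 1 (k * (1 + 0))
  have x01 := hg 0 (k * (0 + 1))
  have x00 := hg 0 (k * (0 + 0))
  rw [h2 (k * (1 + 1)), h2 (k * (1 + 1) - k * 1), h1 (k * (1 + 1) - k * 1)] at x11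
  rw [h2 (k * (1 + 0)), h2 (k * (1 + 0) - k * 1), h1 (k * (1 + 0) - k * 1)] at x10
  rw [h2 (k * (0 + 1)), h2 (k * (0 + 1) - k * 0), h1 (k * (0 + 1) - k * 0)] at x01
  rw [h2 (k * (0 + 0)), h2 (k * (0 + 0) - k * 0), h1 (k * (0 + 0) - k * 0)] at x00
  rw [h2 (k * (1 + 1)), h1' (k * (1 + 1))] at e11
  rw [h2 (k * (1 + 0)), h1' (k * (1 + 0))] at e10
  rw [h2 (k * (0 + 1)), h1' (k * (0 + 1))] at e01
  rw [h2 (k * (0 + 0)), h1' (k * (0 + 0))] at e00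
  have : k ^ 2 * (hc h' 1 - hc h' 0) = 0 := by
    linear_combination (e11 - e10 - e01 + e00) + (x11 - x10 - x01 + x00) + k ^ 2 * hCC
  have h3 : hc h' 1 - hc h' 0 = 0 := by simpa [hk] using this
  linear_combination h3

/-- shape of the restricted functions -/
lemma Mdl.shape (H : Mdl k f g h e f' g' h' e') :
    (∃ d : ℂ, ∀ w, e 0 0 0 w = e 0 0 0 0 + d * w) ∧
    (∀ y w, f 0 0 y w = f 0 0 0 0 + fP f * w - fA f 0 * y - fB f 0 * y ^ 2) ∧
    (∀ y w, h 0 0 y w = h 0 0 0 0 + hc h 0 * y + k / 2 * fP f' * y ^ 2) ∧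
    (∀ y w, g 0 0 y w = g 0 0 0 0 + fB f' 0 * y - gM g 0 * y ^ 2) ∧
    fA f 0 = - fA f' 0 ∧ gM g' 0 = - gM g 0 := by
  refine ⟨?_, ?_, ?_, ?_, H.Aconst 0 0, H.MM 0⟩
  · obtain ⟨d, h1, h2⟩ := H.quad
    refine ⟨d, fun w => ?_⟩
    rw [h2 w, H.C1]; ring
  · intro y w
    rw [H.fform2]; ring
  · intro y w
    obtain ⟨d', h1', h2'⟩ := H.swap.quad
    rw [H.hform2, h1' w, H.swap.C1]
    ring
  · intro y w
    rw [H.gform1, H.Mconst]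

lemma Mdl.zero (H : Mdl k f g h e f' g' h' e') (h1 : ∀ w, e 0 0 0 w = 0)
    (h2 : ∀ y w, f 0 0 y w = 0) (h3 : ∀ y w, h 0 0 y w = 0) (h4 : ∀ y w, g 0 0 y w = 0)
    (h2' : ∀ y w, f' 0 0 y w = 0) (h3' : ∀ y w, h' 0 0 y w = 0) (h4' : ∀ y w, g' 0 0 y w = 0)
    (z1 z2 y w : ℂ) : f z1 z2 y w = 0 ∧ g z1 z2 y w = 0 ∧ h z1 z2 y w = 0 ∧ e z1 z2 y w = 0 := by
  have hk := H.hk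
  have he : ∀ z1 z2 y w, e z1 z2 y w = 0 := by
    intro z1 z2 y w
    rw [H.eform, h1, h2', h3', h4']; ring
  have he' : ∀ z1 z2 y w, e' z1 z2 y w = 0 := by
    intro z1 z2 y w
    rw [H.swap.eform, ← H.e0, h1, h2, h3, h4]; ring
  have hh : h z1 z2 y w = 0 := by
    rw [H.hform, h3]
    unfold hc
    rw [h3, h3]
    have : (fun t => f' 0 0 0 t) = fun _ => 0 := by funext t; exact h2' 0 t
    rw [this]
    simp
  have a1 := H.eq z1 z2 y 0 0 1 (w - k * (z1 + z2)) w (by ring)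
  have a2 := H.eq z1 z2 y 0 0 (-1) (w - k * (-z1 + z2)) w (by ring)
  rw [he, he', h2', h3', h4'] at a1 a2
  refine ⟨?_, ?_, hh, he _ _ _ _⟩
  · apply mul_left_cancel₀ hk
    linear_combination -(a1 - a2) / 2
  · apply mul_left_cancel₀ hk
    linear_combination -(a1 + a2) / 2

end Model


/-- the height of the model hypersurface -/
noncomputable def PP (z1 z2 y : ℂ) : ℝ := 2 * (z1 * conj y).re + 2 * (z2 * (conj y) ^ 2).re

/-- parametrization of the model hypersurface -/
noncomputable def mpt (x : ℂ × ℂ × ℂ × ℝ) : E4 :=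
  ![x.1, x.2.1, x.2.2.1, (x.2.2.2 : ℂ) + (PP x.1 x.2.1 x.2.2.1 : ℂ) * I]

/-- derivative of the model defining function at `p` along `v` -/
noncomputable def mdl (p v : E4) : ℝ :=
  (v 3).im - 2 * (v 0 * conj (p 2) + p 0 * conj (v 2)).re
    - 2 * (v 1 * (conj (p 2)) ^ 2 + 2 * p 1 * conj (p 2) * conj (v 2)).re

/-- An entire function vanishing at small real vectors vanishes. -/
lemma entire_zero_of_real {n : ℕ} (Φ : (Fin n → ℂ) → ℂ) (hΦ : Differentiable ℂ Φ) (ε : ℝ) (hε : 0 < ε)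
    (h : ∀ x : Fin n → ℝ, (∀ i, |x i| < ε) → Φ (fun i => (x i : ℂ)) = 0) (y : Fin n → ℂ) :
    Φ y = 0 := by
  have key : ∀ S : Finset (Fin n), ∀ y : Fin n → ℂ,
      (∀ i, i ∉ S → ∃ r : ℝ, |r| < ε ∧ y i = r) → Φ y = 0 := by
    intro S
    induction S using Finset.induction_on with
    | empty =>
      intro y hy
      choose x hx1 hx2 using fun i => hy i (Finset.notMem_empty i)
      have : y = fun i => (x i : ℂ) := funext hx2
      rw [this]
      exact h x hx1
    | insert j S hj ih =>
      intro y hy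
      have hd : Differentiable ℂ (fun s : ℂ => Φ (Function.update y j s)) := by
        apply hΦ.comp
        rw [differentiable_pi]
        intro i
        by_cases hij : i = j
        · subst hij; simp
        · simp [Function.update_of_ne hij]
      have hfreq : ∃ᶠ s in 𝓝[≠] (0:ℂ), (fun s : ℂ => Φ (Function.update y j s)) s = (fun _ => 0) s := by
        rw [frequently_iff]
        intro U hU
        rw [mem_nhdsWithin] at hU
        obtain ⟨V, hV, h0, hVU⟩ := hU
        obtain ⟨δ, hδ, hb⟩ := Metric.isOpen_iff.1 hV 0 h0
        refine ⟨((min δ ε / 2 : ℝ) : ℂ), hVU ⟨hb ?_, ?_⟩, ?_⟩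
        · have : 0 < min δ ε := lt_min hδ hε
          rw [Metric.mem_ball, dist_zero_right, Complex.norm_real, Real.norm_eq_abs,
            abs_of_pos (by positivity)]
          linarith [min_le_left δ ε]
        · have : 0 < min δ ε := lt_min hδ hε
          have : min δ ε / 2 ≠ 0 := by positivity
          simpa using (Complex.ofReal_ne_zero.2 this)
        · apply ih
          intro i hi
          by_cases hij : i = j
          · refine ⟨min δ ε / 2, ?_, ?_⟩
            · have : 0 < min δ ε := lt_min hδ hε
              rw [abs_of_pos (by positivity)]
              linarith [min_le_right δ ε]
            · subst hij; simp
          · rw [Function.update_of_ne hij]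
            apply hy
            simp [hij, hi]
      have := AnalyticOnNhd.eq_of_frequently_eq (𝕜 := ℂ) (z₀ := (0:ℂ))
        (fun s _ => hd.analyticAt s) (fun s _ => analyticAt_const) hfreq
      have h2 := congrFun this (y j)
      simpa using h2
  exact key Finset.univ y (by simp)

lemma vec4_eta (p : E4) : ![p 0, p 1, p 2, p 3] = p := by
  funext i; fin_cases i <;> rfl

lemma conj_vec4 (a b c d : ℂ) : star (![a, b, c, d] : E4) = ![conj a, conj b, conj c, conj d] := by
  funext i; fin_cases i <;> rfl

/-- component in curried form -/
def cur (Z : E4 → E4) (j : Fin 4) (a b c d : ℂ) : ℂ := Z ![a, b, c, d] j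
/-- conjugate component in curried form -/
noncomputable def cur' (Z : E4 → E4) (j : Fin 4) (a b c d : ℂ) : ℂ :=
  conj (Z ![conj a, conj b, conj c, conj d] j)

lemma cur_dif (Z : E4 → E4) (hZ : Differentiable ℂ Z) (j : Fin 4) : Dif4 (cur Z j) := by
  unfold Dif4 cur
  simp only [vec4_eta]
  exact (differentiable_pi.1 hZ) j

lemma cur'_dif (Z : E4 → E4) (hZ : Differentiable ℂ Z) (j : Fin 4) : Dif4 (cur' Z j) := by
  unfold Dif4 cur'
  have h1 : Differentiable ℂ (fun p => Z p j) := (differentiable_pi.1 hZ) j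
  intro p
  have h2 := (h1 (star p)).star_star
  rw [star_star] at h2
  have : (star ∘ (fun p => Z p j) ∘ star) =
      (fun p : E4 => conj (Z ![conj (p 0), conj (p 1), conj (p 2), conj (p 3)] j)) := by
    funext p
    have : star p = ![conj (p 0), conj (p 1), conj (p 2), conj (p 3)] := by
      conv_lhs => rw [← vec4_eta p]
      exact conj_vec4 _ _ _ _
    simp only [Function.comp, this]
    rfl
  rw [this] at h2
  exact h2

lemma Dif4.comp7 {f : ℂ → ℂ → ℂ → ℂ → ℂ} (hf : Dif4 f) {u v w x : (Fin 7 → ℂ) → ℂ}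
    (hu : Differentiable ℂ u) (hv : Differentiable ℂ v) (hw : Differentiable ℂ w)
    (hx : Differentiable ℂ x) : Differentiable ℂ (fun s => f (u s) (v s) (w s) (x s)) := by
  have h : Differentiable ℂ (fun s => (![u s, v s, w s, x s] : E4)) := by
    rw [differentiable_pi]
    intro i
    fin_cases i
    · exact hu
    · exact hv
    · exact hw
    · exact hx
  exact Differentiable.comp (g := fun p : E4 => f (p 0) (p 1) (p 2) (p 3)) hf h

lemma mdl_complex (p v : E4) : ((2 * I) * (mdl p v : ℝ) : ℂ) = v 3 - conj (v 3)
    - 2 * I * (v 0 * conj (p 2) + conj (v 0) * p 2 + v 1 * (conj (p 2)) ^ 2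
      + conj (v 1) * (p 2) ^ 2 + v 2 * (conj (p 0) + 2 * p 2 * conj (p 1))
      + conj (v 2) * (p 0 + 2 * conj (p 2) * p 1)) := by
  have h1 : ∀ z : ℂ, ((2 * z.re : ℝ) : ℂ) = z + conj z := by
    intro z; rw [Complex.add_conj]
  have h2 : ∀ z : ℂ, (2 * I * (z.im : ℝ) : ℂ) = z - conj z := by
    intro z; rw [Complex.sub_conj]; push_cast; ring
  unfold mdl
  rw [Complex.ofReal_sub, Complex.ofReal_sub, h1, h1, mul_sub, mul_sub, h2]
  simp only [map_add, map_mul, map_pow, Complex.conj_conj, map_ofNat]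
  ring

lemma mdl_of_tangent (Z : E4 → E4) (hZ : Differentiable ℂ Z)
    (hT : ∀ᶠ x : ℂ × ℂ × ℂ × ℝ in 𝓝 0, mdl (mpt x) (Z (mpt x)) = 0) :
    Mdl (2 * I) (cur Z 0) (cur Z 1) (cur Z 2) (cur Z 3)
      (cur' Z 0) (cur' Z 1) (cur' Z 2) (cur' Z 3) where
  hk := by simp
  hf := cur_dif Z hZ _
  hg := cur_dif Z hZ _
  hh := cur_dif Z hZ _
  he := cur_dif Z hZ _
  hf' := cur'_dif Z hZ _
  hg' := cur'_dif Z hZ _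
  hh' := cur'_dif Z hZ _
  he' := cur'_dif Z hZ _
  eq := by
    have main : ∀ y : Fin 7 → ℂ, ∀ z1 z2 x a b c w t : ℂ, z1 = y 0 + I * y 1 → z2 = y 2 + I * y 3 →
        x = y 4 + I * y 5 → a = y 0 - I * y 1 → b = y 2 - I * y 3 → c = y 4 - I * y 5 →
        w = y 6 + I * (z1 * c + z2 * c ^ 2 + a * x + b * x ^ 2) →
        t = y 6 - I * (z1 * c + z2 * c ^ 2 + a * x + b * x ^ 2) →
        cur Z 3 z1 z2 x w - cur' Z 3 a b c t - 2 * I * (cur Z 0 z1 z2 x w * c + cur' Z 0 a b c t * x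
          + cur Z 1 z1 z2 x w * c ^ 2 + cur' Z 1 a b c t * x ^ 2
          + cur Z 2 z1 z2 x w * (a + 2 * x * b) + cur' Z 2 a b c t * (z1 + 2 * c * z2)) = 0 := by
      intro y z1 z2 x a b c w t h1 h2 h3 h4 h5 h6 h7 h8
      subst h1 h2 h3 h4 h5 h6 h7 h8
      obtain ⟨ε, hε, hb⟩ := Metric.eventually_nhds_iff.1 hT
      have hd : ∀ j, Differentiable ℂ (fun y : Fin 7 → ℂ =>
          cur Z j (y 0 + I * y 1) (y 2 + I * y 3) (y 4 + I * y 5)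
          (y 6 + I * ((y 0 + I * y 1) * (y 4 - I * y 5) + (y 2 + I * y 3) * (y 4 - I * y 5) ^ 2
            + (y 0 - I * y 1) * (y 4 + I * y 5) + (y 2 - I * y 3) * (y 4 + I * y 5) ^ 2))) :=
        fun j => (cur_dif Z hZ j).comp7 (by fun_prop) (by fun_prop) (by fun_prop) (by fun_prop)
      have hd' : ∀ j, Differentiable ℂ (fun y : Fin 7 → ℂ =>
          cur' Z j (y 0 - I * y 1) (y 2 - I * y 3) (y 4 - I * y 5)
          (y 6 - I * ((y 0 + I * y 1) * (y 4 - I * y 5) + (y 2 + I * y 3) * (y 4 - I * y 5) ^ 2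
            + (y 0 - I * y 1) * (y 4 + I * y 5) + (y 2 - I * y 3) * (y 4 + I * y 5) ^ 2))) :=
        fun j => (cur'_dif Z hZ j).comp7 (by fun_prop) (by fun_prop) (by fun_prop) (by fun_prop)
      have gen : ∀ e e' f f' g g' h h' : (Fin 7 → ℂ) → ℂ, Differentiable ℂ e → Differentiable ℂ e' →
          Differentiable ℂ f → Differentiable ℂ f' → Differentiable ℂ g → Differentiable ℂ g' →
          Differentiable ℂ h → Differentiable ℂ h' → Differentiable ℂ (fun y : Fin 7 → ℂ =>
          e y - e' y - 2 * I * (f y * (y 4 - I * y 5) + f' y * (y 4 + I * y 5)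
            + g y * (y 4 - I * y 5) ^ 2 + g' y * (y 4 + I * y 5) ^ 2
            + h y * ((y 0 - I * y 1) + 2 * (y 4 + I * y 5) * (y 2 - I * y 3))
            + h' y * ((y 0 + I * y 1) + 2 * (y 4 - I * y 5) * (y 2 + I * y 3)))) := by
        intros
        fun_prop
      refine entire_zero_of_real _ (gen _ _ _ _ _ _ _ _ (hd 3) (hd' 3) (hd 0) (hd' 0) (hd 1) (hd' 1)
        (hd 2) (hd' 2)) (ε / 3) (by positivity) ?_ y
      intro r hr
      have hc : ∀ i j, ‖(r i + I * r j : ℂ)‖ < ε := by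
        intro i j
        have h1 := hr i
        have h2 := hr j
        calc ‖(r i + I * r j : ℂ)‖ ≤ ‖(r i : ℂ)‖ + ‖(I * r j : ℂ)‖ := norm_add_le _ _
          _ = |r i| + |r j| := by simp
          _ < ε := by linarith
      have hx := hb (y := ((r 0 + I * r 1 : ℂ), (r 2 + I * r 3 : ℂ), (r 4 + I * r 5 : ℂ), r 6)) (by
        rw [dist_zero_right, Prod.norm_def, Prod.norm_def, Prod.norm_def]
        refine max_lt (hc _ _) (max_lt (hc _ _) (max_lt (hc _ _) ?_))
        have := hr 6
        simp only [Real.norm_eq_abs]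
        linarith)
      have hcc : ∀ i j, conj (r i + I * r j : ℂ) = r i - I * r j := by
        intro i j; simp [sub_eq_add_neg]
      have hcc' : ∀ i j, conj (r i - I * r j : ℂ) = r i + I * r j := by
        intro i j; simp
      have hP : ((PP (r 0 + I * r 1) (r 2 + I * r 3) (r 4 + I * r 5) : ℝ) : ℂ) =
          (r 0 + I * r 1) * (r 4 - I * r 5) + (r 2 + I * r 3) * (r 4 - I * r 5) ^ 2
            + (r 0 - I * r 1) * (r 4 + I * r 5) + (r 2 - I * r 3) * (r 4 + I * r 5) ^ 2 := by
        have h1 : ∀ z : ℂ, ((2 * z.re : ℝ) : ℂ) = z + conj z := by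
          intro z; rw [Complex.add_conj]
        unfold PP
        rw [Complex.ofReal_add, h1, h1]
        simp only [map_mul, map_pow, hcc, hcc']
        ring
      have h3 := mdl_complex (mpt ((r 0 + I * r 1 : ℂ), (r 2 + I * r 3 : ℂ), (r 4 + I * r 5 : ℂ), r 6))
        (Z (mpt ((r 0 + I * r 1 : ℂ), (r 2 + I * r 3 : ℂ), (r 4 + I * r 5 : ℂ), r 6)))
      rw [hx] at h3
      unfold mpt at h3
      simp only [Matrix.cons_val, hcc] at h3
      unfold cur cur'
      beta_reduce
      rw [← hP]
      generalize PP (r 0 + I * r 1) (r 2 + I * r 3) (r 4 + I * r 5) = Q at h3 ⊢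
      have hw' : conj ((r 6 : ℂ) - I * Q) = (r 6 : ℂ) + Q * I := by
        simp; ring
      simp only [hw', hcc']
      rw [mul_comm I (Q : ℂ)]
      simp only [Complex.ofReal_zero, mul_zero] at h3
      linear_combination -h3
    intro z1 z2 y a b c t w hw
    have h2 := main ![(z1 + a) / 2, (z1 - a) / (2 * I), (z2 + b) / 2, (z2 - b) / (2 * I),
      (y + c) / 2, (y - c) / (2 * I), (w + t) / 2] z1 z2 y a b c w t
    have hI := Complex.I_ne_zero
    have hs : ∀ u v : ℂ, u = (u + v) / 2 + I * ((u - v) / (2 * I)) := by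
      intro u v; field_simp; ring
    have hs' : ∀ u v : ℂ, v = (u + v) / 2 - I * ((u - v) / (2 * I)) := by
      intro u v; field_simp; ring
    have h3 := h2 (hs _ _) (hs _ _) (hs _ _) (hs' _ _) (hs' _ _) (hs' _ _)
      (by simp only [Matrix.cons_val]; linear_combination hw / 2)
      (by simp only [Matrix.cons_val]; linear_combination -hw / 2)
    linear_combination h3

/-- the weighted dilation -/
def dl (s : ℂ) (p : E4) : E4 := ![s ^ 2 * p 0, s * p 1, s * p 2, s ^ 3 * p 3]

/-- basis vectors used to read off coefficients -/
def ez : E4 := ![0, 0, 1, 0]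
/-- basis vectors used to read off coefficients -/
def ew : E4 := ![0, 0, 0, 1]

lemma two_pow_sep {n m : ℕ} {x : ℂ} (h : (2:ℂ) ^ m * x = 2 ^ n * x) (hnm : n ≠ m) : x = 0 := by
  by_contra hx
  have h1 := mul_right_cancel₀ hx h
  have h2 : (2:ℕ) ^ m = 2 ^ n := by exact_mod_cast h1
  exact hnm (Nat.pow_right_injective le_rfl h2).symm

lemma kill (Z : E4 → E4) (hZ : Differentiable ℂ Z)
    (hT : ∀ᶠ x : ℂ × ℂ × ℂ × ℝ in 𝓝 0, mdl (mpt x) (Z (mpt x)) = 0) (n : ℕ)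
    (m0 : ∀ p, 2 * Z (dl 2 p) 0 = 2 ^ n * Z p 0)
    (m1 : ∀ p, 2 ^ 2 * Z (dl 2 p) 1 = 2 ^ n * Z p 1)
    (m2 : ∀ p, 2 ^ 2 * Z (dl 2 p) 2 = 2 ^ n * Z p 2)
    (m3 : ∀ p, Z (dl 2 p) 3 = 2 ^ n * Z p 3)
    (j0 : n = 0 → (Z 0 3).re = 0) (j1 : n = 1 → Z 0 0 = 0)
    (j2 : n = 2 → Z 0 1 = 0 ∧ Z 0 2 = 0 ∧ (Z ez 0).im = 0)
    (j3 : n = 3 → Z ez 0 = 0 ∧ Z ez 2 = 0 ∧ (Z ew 3).re = 0)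
    (j4 : n = 4 → (Z ez 1).im = 0 ∧ Z ew 0 = 0) : ∀ p, Z p = 0 := by
  have H := mdl_of_tangent Z hZ hT
  have v0 : (![0, 0, 0, 0] : E4) = 0 := by funext i; fin_cases i <;> rfl
  obtain ⟨⟨d, s1⟩, s2, s3, s4, s5, s6⟩ := H.shape
  obtain ⟨-, s2', s3', s4', -, -⟩ := H.swap.shape
  have hce : ∀ w, conj (cur Z 3 0 0 0 w) = cur Z 3 0 0 0 (conj w) := by
    intro w
    rw [H.e0 (conj w)]
    unfold cur cur'
    simp
  have hcf : ∀ j a b c d, cur' Z j a b c d = conj (cur Z j (conj a) (conj b) (conj c) (conj d)) := by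
    intro j a b c d; rfl
  -- homogeneity in restricted form
  have dlv : ∀ y w : ℂ, dl 2 ![0, 0, y, w] = ![0, 0, 2 * y, 8 * w] := by
    intro y w; funext i; fin_cases i <;> simp [dl]; norm_num
  have q0 : ∀ y w, 2 * cur Z 0 0 0 (2 * y) (8 * w) = 2 ^ n * cur Z 0 0 0 y w := by
    intro y w; have := m0 ![0, 0, y, w]; rw [dlv] at this; exact this
  have q1 : ∀ y w, 2 ^ 2 * cur Z 1 0 0 (2 * y) (8 * w) = 2 ^ n * cur Z 1 0 0 y w := by
    intro y w; have := m1 ![0, 0, y, w]; rw [dlv] at this; exact this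
  have q2 : ∀ y w, 2 ^ 2 * cur Z 2 0 0 (2 * y) (8 * w) = 2 ^ n * cur Z 2 0 0 y w := by
    intro y w; have := m2 ![0, 0, y, w]; rw [dlv] at this; exact this
  have q3 : ∀ y w, cur Z 3 0 0 (2 * y) (8 * w) = 2 ^ n * cur Z 3 0 0 y w := by
    intro y w; have := m3 ![0, 0, y, w]; rw [dlv] at this; exact this
  have z0 : ∀ j, cur Z j 0 0 0 0 = Z 0 j := by intro j; unfold cur; rw [v0]
  have zz : ∀ j, cur Z j 0 0 1 0 = Z ez j := by intro j; rfl
  have zw : ∀ j, cur Z j 0 0 0 1 = Z ew j := by intro j; rfl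
  have hf00 := q0 0 0
  have hf01 := q0 0 1
  have hf10 := q0 1 0
  have hfm0 := q0 (-1) 0
  have hg00 := q1 0 0
  have hg10 := q1 1 0
  have hgm0 := q1 (-1) 0
  have hh00 := q2 0 0
  have hh10 := q2 1 0
  have hhm0 := q2 (-1) 0
  have he00 := q3 0 0
  have he01 := q3 0 1
  have rf1 := s2 1 0
  have rf2 := s2 0 1
  have rh1 := s3 1 0
  have rg1 := s4 1 0
  have re1 := s1 1
  rw [s2 (2 * 0) (8 * 1), s2 0 1] at hf01
  rw [s2 (2 * 1) (8 * 0), s2 1 0] at hf10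
  rw [s2 (2 * -1) (8 * 0), s2 (-1) 0] at hfm0
  rw [s4 (2 * 1) (8 * 0), s4 1 0] at hg10
  rw [s4 (2 * -1) (8 * 0), s4 (-1) 0] at hgm0
  rw [s3 (2 * 1) (8 * 0), s3 1 0] at hh10
  rw [s3 (2 * -1) (8 * 0), s3 (-1) 0] at hhm0
  simp only [mul_zero] at he00 he01 hf00 hg00 hh00
  rw [s1 (8 * 1), s1 1] at he01
  have hd := hce 1
  rw [map_one, s1 1, map_add, hce 0, map_zero, mul_one] at hd
  have hdd : conj d = d := by linear_combination hd
  have hA' : fA (cur' Z 0) 0 = conj (fA (cur Z 0) 0) := by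
    unfold fA; rw [hcf, hcf]; simp [map_ofNat]
  have hB' : fB (cur' Z 0) 0 = conj (fB (cur Z 0) 0) := by
    unfold fB; rw [hcf, hcf, hcf]; simp [map_ofNat]
  have hM' : gM (cur' Z 1) 0 = conj (gM (cur Z 1) 0) := by
    unfold gM; rw [hcf, hcf, hcf]; simp [map_ofNat]
  have hP' : fP (cur' Z 0) = conj (fP (cur Z 0)) := by
    have a1 := s2' 0 1
    have a2 := s2 0 1
    rw [hcf, hcf 0 0 0 0 0] at a1
    simp only [map_zero, map_one] at a1
    rw [a2] at a1
    simp only [map_add, map_sub, map_mul, map_one, map_pow, map_zero] at a1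
    linear_combination -a1
  rw [hA'] at s5
  rw [hM'] at s6
  rw [hP'] at s3 hh10 hhm0 rh1
  rw [hB'] at s4 hg10 hgm0 rg1
  have hre : ∀ z : ℂ, conj z = z → z.re = 0 → z = 0 := by
    intro z h1 h2
    rw [Complex.conj_eq_iff_im] at h1
    exact Complex.ext h2 h1
  have him : ∀ z : ℂ, conj z = -z → z.im = 0 → z = 0 := by
    intro z h1 h2
    have := congrArg Complex.re h1
    simp at this
    refine Complex.ext ?_ h2
    simp only [Complex.zero_re]
    linarith
  generalize hfA : fA (cur Z 0) 0 = A at *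
  generalize hfB : fB (cur Z 0) 0 = B at *
  generalize hgM : gM (cur Z 1) 0 = M at *
  generalize hfP : fP (cur Z 0) = φ at *
  generalize hhc : hc (cur Z 2) 0 = C at *
  generalize hf0 : cur Z 0 0 0 0 0 = f0 at *
  generalize hg0 : cur Z 1 0 0 0 0 = g0 at *
  generalize hh0 : cur Z 2 0 0 0 0 = h0 at *
  generalize he0 : cur Z 3 0 0 0 0 = e0 at *
  have kf0 : f0 = 0 := by
    by_cases hn : n = 1
    · rw [← hf0, z0]; exact j1 hn
    · exact two_pow_sep (m := 1) (by linear_combination hf00) hn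
  subst kf0
  have kA : A = 0 := by
    by_cases hn : n = 2
    · have h1 := (j2 hn).2.2
      have hB0 : B = 0 := two_pow_sep (n := n) (m := 3)
        (by linear_combination -(hf10 + hfm0) / 2 + hf00) (by rw [hn]; norm_num)
      rw [← zz, rf1, hB0] at h1
      apply him
      · linear_combination s5
      · simpa using h1
    · exact two_pow_sep (m := 2) (by linear_combination -(hf10 - hfm0) / 2) hn
  subst kA
  have kB : B = 0 := by
    by_cases hn : n = 3
    · have h1 := (j3 hn).1
      rw [← zz, rf1] at h1
      linear_combination -h1
    · exact two_pow_sep (m := 3)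
        (by linear_combination -(hf10 + hfm0) / 2 + hf00) hn
  subst kB
  have kφ : φ = 0 := by
    by_cases hn : n = 4
    · have h1 := (j4 hn).2
      rw [← zw, rf2] at h1
      linear_combination h1
    · exact two_pow_sep (m := 4) (by linear_combination hf01) hn
  subst kφ
  simp only [map_zero] at *
  have kg0 : g0 = 0 := by
    by_cases hn : n = 2
    · rw [← hg0, z0]; exact (j2 hn).1
    · exact two_pow_sep (m := 2) (by linear_combination hg00) hn
  subst kg0
  have kh0 : h0 = 0 := by
    by_cases hn : n = 2
    · rw [← hh0, z0]; exact (j2 hn).2.1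
    · exact two_pow_sep (m := 2) (by linear_combination hh00) hn
  subst kh0
  have kM : M = 0 := by
    by_cases hn : n = 4
    · have h1 := (j4 hn).1
      rw [← zz, rg1] at h1
      apply him
      · exact s6
      · simpa using h1
    · exact two_pow_sep (m := 4) (by linear_combination -(hg10 + hgm0) / 2) hn
  subst kM
  have kC : C = 0 := by
    by_cases hn : n = 3
    · have h1 := (j3 hn).2.1
      rw [← zz, rh1] at h1
      linear_combination h1
    · exact two_pow_sep (m := 3) (by linear_combination hh10) hn
  subst kC
  have ke0 : e0 = 0 := by
    by_cases hn : n = 0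
    · have h1 := j0 hn
      have h2 := hce 0
      rw [map_zero, he0] at h2
      rw [← z0, he0] at h1
      exact hre _ h2 h1
    · exact two_pow_sep (m := 0) (by linear_combination he00) hn
  subst ke0
  have kd : d = 0 := by
    by_cases hn : n = 3
    · have h1 := (j3 hn).2.2
      rw [← zw, re1] at h1
      apply hre _ hdd
      simpa using h1
    · exact two_pow_sep (m := 3) (by linear_combination he01) hn
  subst kd
  have t1 : ∀ w, cur Z 3 0 0 0 w = 0 := by intro w; rw [s1]; ring
  have t2 : ∀ y w, cur Z 0 0 0 y w = 0 := by intro y w; rw [s2]; ring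
  have t3 : ∀ y w, cur Z 2 0 0 y w = 0 := by intro y w; rw [s3]; ring
  have t4 : ∀ y w, cur Z 1 0 0 y w = 0 := by intro y w; rw [s4]; ring
  intro p
  have := H.zero t1 t2 t3 t4 (fun y w => by rw [hcf, map_zero, t2, map_zero])
    (fun y w => by rw [hcf, map_zero, t3, map_zero]) (fun y w => by rw [hcf, map_zero, t4, map_zero])
    (p 0) (p 1) (p 2) (p 3)
  unfold cur at this
  rw [vec4_eta] at this
  obtain ⟨a1, a2, a3, a4⟩ := this
  funext i
  fin_cases i
  · exact a1
  · exact a2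
  · exact a3
  · exact a4

section Taylor

variable {𝕜 : Type*} [RCLike 𝕜] {E V G : Type*} [NormedAddCommGroup E] [NormedSpace 𝕜 E]
  [NormedAddCommGroup V] [NormedSpace 𝕜 V] [CompleteSpace V]
  [NormedAddCommGroup G] [NormedSpace 𝕜 G]

/-- directional derivative -/
noncomputable def Dv (𝕜 : Type*) [RCLike 𝕜] {G V : Type*} [NormedAddCommGroup G] [NormedSpace 𝕜 G]
    [NormedAddCommGroup V] [NormedSpace 𝕜 V] (v : G) (Φ : G → V) : G → V :=
  fun y => fderiv 𝕜 Φ y v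

/-- derivative in the first variable -/
noncomputable def Dt (𝕜 : Type*) [RCLike 𝕜] {E V : Type*} [NormedAddCommGroup E] [NormedSpace 𝕜 E]
    [NormedAddCommGroup V] [NormedSpace 𝕜 V] (Φ : 𝕜 × E → V) : 𝕜 × E → V :=
  Dv 𝕜 ((1, 0) : 𝕜 × E) Φ

lemma Dv_congr {Φ Ψ : G → V} {y : G} (v : G) (h : Φ =ᶠ[𝓝 y] Ψ) : Dv 𝕜 v Φ =ᶠ[𝓝 y] Dv 𝕜 v Ψ := by
  filter_upwards [h.fderiv (𝕜 := 𝕜)] with z hz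
  unfold Dv
  rw [hz]

lemma Dv_analytic {Φ : G → V} {y : G} (v : G) (h : AnalyticAt 𝕜 Φ y) : AnalyticAt 𝕜 (Dv 𝕜 v Φ) y := by
  have h1 := h.fderiv
  exact ((ContinuousLinearMap.apply 𝕜 V v).analyticAt _).comp h1

lemma Dv_comm {Φ : G → V} {y : G} (v w : G) (h : AnalyticAt 𝕜 Φ y) :
    Dv 𝕜 v (Dv 𝕜 w Φ) =ᶠ[𝓝 y] Dv 𝕜 w (Dv 𝕜 v Φ) := by
  filter_upwards [h.eventually_analyticAt] with z hz
  have hs : IsSymmSndFDerivAt 𝕜 Φ z := by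
    apply ContDiffAt.isSymmSndFDerivAt (n := ⊤) (hz.contDiffAt)
    simp [minSmoothness]
  have hd : DifferentiableAt 𝕜 (fderiv 𝕜 Φ) z := hz.fderiv.differentiableAt
  have key : ∀ v w : G, Dv 𝕜 v (Dv 𝕜 w Φ) z = fderiv 𝕜 (fderiv 𝕜 Φ) z v w := by
    intro v w
    have h1 : HasFDerivAt (Dv 𝕜 w Φ)
        ((ContinuousLinearMap.apply 𝕜 V w).comp (fderiv 𝕜 (fderiv 𝕜 Φ) z)) z :=
      (ContinuousLinearMap.apply 𝕜 V w).hasFDerivAt.comp z hd.hasFDerivAt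
    show fderiv 𝕜 (Dv 𝕜 w Φ) z v = _
    rw [h1.fderiv]
    rfl
  rw [key, key]
  exact hs.eq v w

lemma Dt_iter_congr {Φ Ψ : 𝕜 × E → V} {y : 𝕜 × E} (h : Φ =ᶠ[𝓝 y] Ψ) (n : ℕ) :
    (Dt 𝕜)^[n] Φ =ᶠ[𝓝 y] (Dt 𝕜)^[n] Ψ := by
  induction n with
  | zero => exact h
  | succ n ih =>
    rw [Function.iterate_succ', Function.comp, Function.comp]
    exact Dv_congr _ ih

lemma Dt_iter_analytic {Φ : 𝕜 × E → V} {y : 𝕜 × E} (h : AnalyticAt 𝕜 Φ y) (n : ℕ) :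
    AnalyticAt 𝕜 ((Dt 𝕜)^[n] Φ) y := by
  induction n with
  | zero => exact h
  | succ n ih =>
    rw [Function.iterate_succ', Function.comp]
    exact Dv_analytic _ ih

lemma Dt_iter_add {Φ Ψ : 𝕜 × E → V} {y : 𝕜 × E} (h : AnalyticAt 𝕜 Φ y) (h' : AnalyticAt 𝕜 Ψ y)
    (n : ℕ) : (Dt 𝕜)^[n] (fun y => Φ y + Ψ y) =ᶠ[𝓝 y]
      fun y => (Dt 𝕜)^[n] Φ y + (Dt 𝕜)^[n] Ψ y := by
  induction n with
  | zero => exact EventuallyEq.rfl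
  | succ n ih =>
    simp only [Function.iterate_succ', Function.comp]
    refine (Dv_congr _ ih).trans ?_
    filter_upwards [(Dt_iter_analytic h n).eventually_analyticAt,
      (Dt_iter_analytic h' n).eventually_analyticAt] with z hz hz'
    show fderiv 𝕜 _ z _ = fderiv 𝕜 _ z _ + fderiv 𝕜 _ z _
    rw [fderiv_fun_add hz.differentiableAt hz'.differentiableAt]
    rfl

lemma Dt_iter_smul {Φ : 𝕜 × E → V} {y : 𝕜 × E} (h : AnalyticAt 𝕜 Φ y) (c : 𝕜)
    (n : ℕ) : (Dt 𝕜)^[n] (fun y => c • Φ y) =ᶠ[𝓝 y] fun y => c • (Dt 𝕜)^[n] Φ y := by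
  induction n with
  | zero => exact EventuallyEq.rfl
  | succ n ih =>
    simp only [Function.iterate_succ', Function.comp]
    refine (Dv_congr _ ih).trans ?_
    filter_upwards [(Dt_iter_analytic h n).eventually_analyticAt] with z hz
    show fderiv 𝕜 _ z _ = c • fderiv 𝕜 _ z _
    rw [fderiv_fun_const_smul hz.differentiableAt]
    rfl

lemma Dt_iter_Dv {Φ : 𝕜 × E → V} {y : 𝕜 × E} (h : AnalyticAt 𝕜 Φ y) (w : 𝕜 × E) (n : ℕ) :
    (Dt 𝕜)^[n] (Dv 𝕜 w Φ) =ᶠ[𝓝 y] Dv 𝕜 w ((Dt 𝕜)^[n] Φ) := by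
  induction n with
  | zero => exact EventuallyEq.rfl
  | succ n ih =>
    simp only [Function.iterate_succ', Function.comp]
    exact (Dv_congr _ ih).trans (Dv_comm _ _ (Dt_iter_analytic h n))

/-- Taylor expansion in the first variable, to leading order, uniformly in the second variable. -/
lemma taylor_lead (n : ℕ) : ∀ (Φ : 𝕜 × E → V) (x0 : E), AnalyticAt 𝕜 Φ (0, x0) →
    (∀ j < n, ∀ᶠ x in 𝓝 x0, (Dt 𝕜)^[j] Φ (0, x) = 0) →
    (fun y : 𝕜 × E => Φ y - y.1 ^ n • (((n.factorial : 𝕜)⁻¹) • (Dt 𝕜)^[n] Φ (0, x0)))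
      =o[𝓝 (0, x0)] (fun y : 𝕜 × E => y.1 ^ n) := by
  induction n with
  | zero =>
    intro Φ x0 hΦ _
    simp only [pow_zero, Nat.factorial_zero, Nat.cast_one, inv_one, one_smul, Function.iterate_zero, id]
    rw [Asymptotics.isLittleO_one_iff]
    have := hΦ.continuousAt.tendsto.sub_const (Φ (0, x0))
    simpa using this
  | succ n ih =>
    intro Φ x0 hΦ hj
    have h1 := ih (Dt 𝕜 Φ) x0 (Dv_analytic _ hΦ) (fun j hjn => by
      have := hj (j + 1) (by omega)
      simpa only [Function.iterate_succ, Function.comp] using this)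
    have h0 := hj 0 (by omega)
    simp only [Function.iterate_zero, id] at h0
    rw [Asymptotics.isLittleO_iff] at h1 ⊢
    intro ε hε
    have h2 := (h1 hε).and hΦ.eventually_analyticAt
    rw [nhds_prod_eq] at h2 ⊢
    obtain ⟨pa, hpa, pb, hpb, hp⟩ := eventually_prod_iff.1 h2
    obtain ⟨r, hr, hb⟩ := Metric.eventually_nhds_iff.1 hpa
    rw [eventually_prod_iff]
    refine ⟨fun t => dist t 0 < r, Metric.eventually_nhds_iff.2 ⟨r, hr, fun y hy => hy⟩,
      fun x => pb x ∧ Φ (0, x) = 0, hpb.and h0, ?_⟩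
    intro t ht x hx
    set c := (Dt 𝕜)^[n + 1] Φ (0, x0) with hc
    have hder : ∀ s ∈ Metric.closedBall (0:𝕜) ‖t‖, HasDerivWithinAt
        (fun s : 𝕜 => Φ (s, x) - s ^ (n + 1) • ((((n + 1).factorial : 𝕜)⁻¹) • c))
        (Dt 𝕜 Φ (s, x) - s ^ n • (((n.factorial : 𝕜)⁻¹) • c)) (Metric.closedBall (0:𝕜) ‖t‖) s := by
      intro s hs
      apply HasDerivAt.hasDerivWithinAt
      have hs' : dist s 0 < r := lt_of_le_of_lt (by simpa using hs) (by simpa using ht)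
      have han := (hp (hb hs') hx.1).2
      apply HasDerivAt.sub
      · have e1 : HasDerivAt (fun s : 𝕜 => (s, x)) ((1, 0) : 𝕜 × E) s :=
          (hasDerivAt_id s).prodMk (hasDerivAt_const s x)
        exact han.differentiableAt.hasFDerivAt.comp_hasDerivAt s e1
      · have e2 := (hasDerivAt_pow (n + 1) s).smul_const ((((n + 1).factorial : 𝕜)⁻¹) • c)
        convert e2 using 1
        rw [smul_smul, smul_smul]
        congr 1
        rw [Nat.factorial_succ]
        have : (n.factorial : 𝕜) ≠ 0 := by exact_mod_cast Nat.factorial_ne_zero n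
        have : ((n + 1 : ℕ) : 𝕜) ≠ 0 := by exact_mod_cast Nat.succ_ne_zero n
        push_cast at this ⊢
        field_simp
    have hbd : ∀ s ∈ Metric.closedBall (0:𝕜) ‖t‖,
        ‖Dt 𝕜 Φ (s, x) - s ^ n • (((n.factorial : 𝕜)⁻¹) • c)‖ ≤ ε * ‖t‖ ^ n := by
      intro s hs
      have hs' : dist s 0 < r := lt_of_le_of_lt (by simpa using hs) (by simpa using ht)
      have h3 := (hp (hb hs') hx.1).1
      simp only [hc, Function.iterate_succ, Function.comp] at h3 ⊢
      refine h3.trans ?_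
      rw [norm_pow]
      have : ‖s‖ ≤ ‖t‖ := by simpa using hs
      gcongr
    have hcv : Convex ℝ (Metric.closedBall (0:𝕜) ‖t‖) := convex_closedBall _ _
    have h4 := Convex.norm_image_sub_le_of_norm_hasDerivWithin_le hder hbd hcv
      (x := 0) (y := t) (by simp) (by simp)
    simp only [hx.2, sub_zero, ne_eq, Nat.succ_ne_zero, not_false_eq_true, zero_pow, zero_smul,
      norm_pow] at h4 ⊢
    rw [pow_succ ‖t‖, ← mul_assoc]
    exact h4

end Taylor

lemma lead_tendsto {𝕜 : Type*} [RCLike 𝕜] {E V : Type*} [NormedAddCommGroup E] [NormedSpace 𝕜 E]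
    [NormedAddCommGroup V] [NormedSpace 𝕜 V] [CompleteSpace V] (n : ℕ) (Φ : 𝕜 × E → V) (x0 : E)
    (hΦ : AnalyticAt 𝕜 Φ (0, x0))
    (hj : ∀ j < n, ∀ᶠ x in 𝓝 x0, (Dt 𝕜)^[j] Φ (0, x) = 0)
    {ι : Type*} {l : Filter ι} (a : ι → 𝕜) (b : ι → E) (ha : Tendsto a l (𝓝 0))
    (hb : Tendsto b l (𝓝 x0)) (ha0 : ∀ᶠ i in l, a i ≠ 0) :
    Tendsto (fun i => ((a i) ^ n)⁻¹ • Φ (a i, b i)) l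
      (𝓝 (((n.factorial : 𝕜)⁻¹) • (Dt 𝕜)^[n] Φ (0, x0))) := by
  have h1 := taylor_lead n Φ x0 hΦ hj
  have hab : Tendsto (fun i => (a i, b i)) l (𝓝 ((0 : 𝕜), x0)) := ha.prodMk_nhds hb
  have h2 := h1.comp_tendsto hab
  set c := ((n.factorial : 𝕜)⁻¹) • (Dt 𝕜)^[n] Φ (0, x0) with hc
  rw [Asymptotics.isLittleO_iff] at h2
  rw [Metric.tendsto_nhds]
  intro ε hε
  filter_upwards [h2 (half_pos hε), ha0] with i hi hi0
  simp only [Function.comp] at hi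
  have hp : (a i) ^ n ≠ 0 := pow_ne_zero _ hi0
  have e1 : ((a i) ^ n)⁻¹ • Φ (a i, b i) - c = ((a i) ^ n)⁻¹ • (Φ (a i, b i) - (a i) ^ n • c) := by
    rw [smul_sub, smul_smul, inv_mul_cancel₀ hp, one_smul]
  rw [dist_eq_norm, e1, norm_smul, norm_inv]
  have hpp : 0 < ‖(a i) ^ n‖ := norm_pos_iff.2 hp
  rw [inv_mul_lt_iff₀ hpp]
  have : ε / 2 * ‖(a i) ^ n‖ < ‖(a i) ^ n‖ * ε := by nlinarith
  linarith

/-- weighted dilation on the real parameter space -/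
def dr (t : ℝ) (x : ℂ × ℂ × ℂ × ℝ) : ℂ × ℂ × ℂ × ℝ :=
  ((t : ℂ) ^ 2 * x.1, (t : ℂ) * x.2.1, (t : ℂ) * x.2.2.1, t ^ 3 * x.2.2.2)

lemma dr_analytic (y : ℝ × (ℂ × ℂ × ℂ × ℝ)) :
    AnalyticAt ℝ (fun y : ℝ × (ℂ × ℂ × ℂ × ℝ) => dr y.1 y.2) y := by
  have h0 : AnalyticAt ℝ (fun y : ℝ × (ℂ × ℂ × ℂ × ℝ) => ((y.1 : ℝ) : ℂ)) y :=
    (Complex.ofRealCLM.analyticAt _).comp analyticAt_fst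
  have h1 : AnalyticAt ℝ (fun y : ℝ × (ℂ × ℂ × ℂ × ℝ) => y.2.1) y :=
    analyticAt_fst.comp analyticAt_snd
  have h2 : AnalyticAt ℝ (fun y : ℝ × (ℂ × ℂ × ℂ × ℝ) => y.2.2) y :=
    analyticAt_snd.comp analyticAt_snd
  have h3 : AnalyticAt ℝ (fun y : ℝ × (ℂ × ℂ × ℂ × ℝ) => y.2.2.1) y :=
    analyticAt_fst.comp h2
  have h4 : AnalyticAt ℝ (fun y : ℝ × (ℂ × ℂ × ℂ × ℝ) => y.2.2.2) y :=
    analyticAt_snd.comp h2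
  have h5 : AnalyticAt ℝ (fun y : ℝ × (ℂ × ℂ × ℂ × ℝ) => y.2.2.2.1) y :=
    analyticAt_fst.comp h4
  have h6 : AnalyticAt ℝ (fun y : ℝ × (ℂ × ℂ × ℂ × ℝ) => y.2.2.2.2) y :=
    analyticAt_snd.comp h4
  exact ((h0.pow 2).mul h1).prod ((h0.mul h3).prod ((h0.mul h5).prod ((analyticAt_fst.pow 3).mul h6)))

lemma dr_zero (x : ℂ × ℂ × ℂ × ℝ) : dr 0 x = 0 := by
  simp [dr]

/-- `dr t` as a continuous linear map -/
noncomputable def drL (t : ℝ) : (ℂ × ℂ × ℂ × ℝ) →L[ℝ] (ℂ × ℂ × ℂ × ℝ) :=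
  LinearMap.toContinuousLinearMap
    { toFun := dr t
      map_add' := by intro x y; simp [dr, mul_add]
      map_smul' := by
        intro c x
        simp only [dr, Prod.smul_fst, Prod.smul_snd, Complex.real_smul, smul_eq_mul, RingHom.id_apply,
          Prod.smul_mk]
        refine Prod.ext ?_ (Prod.ext ?_ (Prod.ext ?_ ?_)) <;> simp only [] <;> ring }

lemma drL_apply (t : ℝ) (x : ℂ × ℂ × ℂ × ℝ) : drL t x = dr t x := rfl

lemma F_small (F : ℂ × ℂ × ℂ × ℝ → ℝ) (hF : AnalyticAt ℝ F 0)
    (hF4 : ∀ᶠ x : ℂ × ℂ × ℂ × ℝ in 𝓝 0,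
      Tendsto (fun t : ℝ => F (dr t x) / t ^ 3) (𝓝[≠] (0 : ℝ)) (𝓝 0)) :
    ∀ᶠ x : ℂ × ℂ × ℂ × ℝ in 𝓝 0,
      Tendsto (fun t : ℝ => F (dr t x) / t ^ 3) (𝓝[≠] (0 : ℝ)) (𝓝 0) ∧
      ∀ v, Tendsto (fun t : ℝ => fderiv ℝ F (dr t x) (dr t v) / t ^ 3) (𝓝[≠] (0 : ℝ)) (𝓝 0) := by
  set Φ : ℝ × (ℂ × ℂ × ℂ × ℝ) → ℝ := fun y => F (dr y.1 y.2) with hΦdef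
  have hΦ : ∀ x, AnalyticAt ℝ Φ (0, x) := by
    intro x
    have h1 : AnalyticAt ℝ F ((fun y : ℝ × (ℂ × ℂ × ℂ × ℝ) => dr y.1 y.2) (0, x)) := by
      simp only [dr_zero]; exact hF
    exact AnalyticAt.comp (g := F) (f := fun y : ℝ × (ℂ × ℂ × ℂ × ℝ) => dr y.1 y.2) h1 (dr_analytic (0, x))
  have hid : Tendsto (fun t : ℝ => t) (𝓝[≠] (0:ℝ)) (𝓝 0) := tendsto_id.mono_left nhdsWithin_le_nhds
  have hne : ∀ᶠ t : ℝ in 𝓝[≠] (0:ℝ), t ≠ 0 := eventually_mem_nhdsWithin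
  have hvan : ∀ j, j ≤ 3 → ∀ᶠ x in 𝓝 (0 : ℂ × ℂ × ℂ × ℝ), (Dt ℝ)^[j] Φ (0, x) = 0 := by
    intro j
    induction j using Nat.strong_induction_on with
    | _ j ih =>
      intro hj
      have hall : ∀ᶠ x in 𝓝 (0 : ℂ × ℂ × ℂ × ℝ), ∀ i < j, (Dt ℝ)^[i] Φ (0, x) = 0 := by
        have h1 : ∀ i ∈ Finset.range j, ∀ᶠ x in 𝓝 (0 : ℂ × ℂ × ℂ × ℝ), (Dt ℝ)^[i] Φ (0, x) = 0 :=
          fun i hi => ih i (Finset.mem_range.1 hi) (by have := Finset.mem_range.1 hi; omega)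
        have h2 := (Filter.eventually_all_finset (Finset.range j)).2 h1
        filter_upwards [h2] with x hx i hi
        exact hx i (Finset.mem_range.2 hi)
      filter_upwards [hall.eventually_nhds, hF4] with x hx hx4
      have h1 := lead_tendsto j Φ x (hΦ x) (fun i hi => hx.mono (fun z hz => hz i hi))
        (l := 𝓝[≠] (0:ℝ)) (fun t => t) (fun _ => x) hid tendsto_const_nhds hne
      have h2 : Tendsto (fun t : ℝ => t ^ (3 - j) * (F (dr t x) / t ^ 3)) (𝓝[≠] (0:ℝ)) (𝓝 0) := by
        have := (hid.pow (3 - j)).mul hx4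
        simpa using this
      have h3 : (fun t : ℝ => t ^ (3 - j) * (F (dr t x) / t ^ 3)) =ᶠ[𝓝[≠] (0:ℝ)]
          (fun t => (t ^ j)⁻¹ • Φ (t, x)) := by
        filter_upwards [hne] with t ht
        simp only [hΦdef, smul_eq_mul]
        have : t ^ 3 = t ^ (3 - j) * t ^ j := by rw [← pow_add]; congr 1; omega
        rw [this]
        field_simp
      have h4 := tendsto_nhds_unique h1 (h2.congr' h3)
      have h5 : ((j.factorial : ℝ)⁻¹) ≠ 0 := by
        apply inv_ne_zero; exact_mod_cast Nat.factorial_ne_zero j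
      simpa [h5, Nat.factorial_ne_zero] using h4
  have hall : ∀ᶠ x in 𝓝 (0 : ℂ × ℂ × ℂ × ℝ), ∀ i ≤ 3, (Dt ℝ)^[i] Φ (0, x) = 0 := by
    have h2 := (Filter.eventually_all_finset (Finset.range 4)).2
      (fun i hi => hvan i (by have := Finset.mem_range.1 hi; omega))
    filter_upwards [h2] with x hx i hi
    exact hx i (Finset.mem_range.2 (by omega))
  filter_upwards [hall.eventually_nhds, hF4] with x hx hx4
  refine ⟨hx4, fun v => ?_⟩
  set Ψ := Dv ℝ ((0, v) : ℝ × (ℂ × ℂ × ℂ × ℝ)) Φ with hΨ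
  have hΨvan : ∀ j ≤ 3, ∀ z, (∀ᶠ x' in 𝓝 z, ∀ i ≤ 3, (Dt ℝ)^[i] Φ (0, x') = 0) →
      (Dt ℝ)^[j] Ψ (0, z) = 0 := by
    intro j hj z hz
    have h1 := (Dt_iter_Dv (hΦ z) ((0, v) : ℝ × (ℂ × ℂ × ℂ × ℝ)) j).eq_of_nhds
    rw [h1]
    have han := (Dt_iter_analytic (hΦ z) j).differentiableAt.hasFDerivAt
    have hc : HasDerivAt (fun s : ℝ => ((0 : ℝ), z + s • v)) ((0, v) : ℝ × (ℂ × ℂ × ℂ × ℝ)) 0 := by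
      apply (hasDerivAt_const _ _).prodMk
      simpa using ((hasDerivAt_id (0:ℝ)).smul_const v).const_add z
    have han' : HasFDerivAt ((Dt ℝ)^[j] Φ) (fderiv ℝ ((Dt ℝ)^[j] Φ) (0, z)) (0, z + (0:ℝ) • v) := by
      simpa using han
    have h2 := han'.comp_hasDerivAt (0:ℝ) hc
    have hcont : Tendsto (fun s : ℝ => z + s • v) (𝓝 0) (𝓝 z) := by
      have : Continuous (fun s : ℝ => z + s • v) := by fun_prop
      have := this.tendsto 0
      simpa using this
    have h3 : ((Dt ℝ)^[j] Φ) ∘ (fun s : ℝ => ((0 : ℝ), z + s • v)) =ᶠ[𝓝 0] fun _ => 0 := by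
      filter_upwards [hcont.eventually hz] with s hs
      exact hs j hj
    exact h2.unique ((hasDerivAt_const (0:ℝ) (0:ℝ)).congr_of_eventuallyEq h3)
  have hΨan : AnalyticAt ℝ Ψ (0, x) := Dv_analytic _ (hΦ x)
  have h1 := lead_tendsto 3 Ψ x hΨan
    (fun i hi => by
      filter_upwards [hx.eventually_nhds] with z hz
      exact hΨvan i (by omega) z hz)
    (l := 𝓝[≠] (0:ℝ)) (fun t => t) (fun _ => x) hid tendsto_const_nhds hne
  rw [hΨvan 3 le_rfl x hx, smul_zero] at h1
  refine h1.congr' ?_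
  have hdiff : ∀ᶠ t in 𝓝[≠] (0:ℝ), DifferentiableAt ℝ F (dr t x) ∧ DifferentiableAt ℝ Φ (t, x) := by
    apply Filter.Eventually.filter_mono nhdsWithin_le_nhds
    have e1 : Tendsto (fun t : ℝ => dr t x) (𝓝 0) (𝓝 0) := by
      have h2 := (dr_analytic (0, x)).continuousAt.tendsto
      have h3 : Tendsto (fun t : ℝ => (t, x)) (𝓝 0) (𝓝 (0, x)) := by
        have : Continuous (fun t : ℝ => (t, x)) := by fun_prop
        exact this.tendsto 0
      have := h2.comp h3
      simpa [dr_zero, Function.comp_def] using this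
    have e2 : Tendsto (fun t : ℝ => (t, x)) (𝓝 0) (𝓝 (0, x)) := by
      have : Continuous (fun t : ℝ => (t, x)) := by fun_prop
      exact this.tendsto 0
    filter_upwards [e1.eventually hF.eventually_analyticAt,
      e2.eventually (hΦ x).eventually_analyticAt] with t ht ht'
    exact ⟨ht.differentiableAt, ht'.differentiableAt⟩
  filter_upwards [hdiff] with t ht
  have h5 : Ψ (t, x) = fderiv ℝ F (dr t x) (dr t v) := by
    have a1 : HasFDerivAt (fun z => Φ (t, z)) ((fderiv ℝ Φ (t, x)).comp
        (ContinuousLinearMap.inr ℝ ℝ (ℂ × ℂ × ℂ × ℝ))) x :=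
      ht.2.hasFDerivAt.comp x (hasFDerivAt_prodMk_right t x)
    have a2 : HasFDerivAt (fun z => Φ (t, z)) ((fderiv ℝ F (dr t x)).comp (drL t)) x :=
      HasFDerivAt.comp (g := F) x ht.1.hasFDerivAt (drL t).hasFDerivAt
    have a3 := congrArg (fun L => L v) (a1.unique a2)
    simpa [drL_apply, hΨ, Dv] using a3
  rw [h5, smul_eq_mul, div_eq_inv_mul]

lemma rho_hasDeriv (F : ℂ × ℂ × ℂ × ℝ → ℝ) (q v : E4)
    (hF : DifferentiableAt ℝ F (q 0, q 1, q 2, (q 3).re)) :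
    fderiv ℝ (rho F) q v = mdl q v - fderiv ℝ F (q 0, q 1, q 2, (q 3).re) (v 0, v 1, v 2, (v 3).re) := by
  have p : ∀ i : Fin 4, HasFDerivAt (fun x : E4 => x i)
      (ContinuousLinearMap.proj (R := ℝ) (φ := fun _ : Fin 4 => ℂ) i) q :=
    fun i => (ContinuousLinearMap.proj (R := ℝ) (φ := fun _ : Fin 4 => ℂ) i).hasFDerivAt
  have c2 : HasFDerivAt (fun x : E4 => conj (x 2))
      ((Complex.conjCLE : ℂ →L[ℝ] ℂ).comp (ContinuousLinearMap.proj (R := ℝ) (φ := fun _ : Fin 4 => ℂ) 2)) q :=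
    (Complex.conjCLE : ℂ →L[ℝ] ℂ).hasFDerivAt.comp q (p 2)
  have r3 : HasFDerivAt (fun x : E4 => (x 3).re)
      (Complex.reCLM.comp (ContinuousLinearMap.proj (R := ℝ) (φ := fun _ : Fin 4 => ℂ) 3)) q :=
    Complex.reCLM.hasFDerivAt.comp q (p 3)
  have i3 : HasFDerivAt (fun x : E4 => (x 3).im)
      (Complex.imCLM.comp (ContinuousLinearMap.proj (R := ℝ) (φ := fun _ : Fin 4 => ℂ) 3)) q :=
    Complex.imCLM.hasFDerivAt.comp q (p 3)
  have a1 := (Complex.reCLM.hasFDerivAt.comp q ((p 0).mul c2)).const_mul 2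
  have a2 := (Complex.reCLM.hasFDerivAt.comp q ((p 1).mul (c2.pow 2))).const_mul 2
  have a3 : HasFDerivAt (fun x : E4 => (x 0, x 1, x 2, (x 3).re)) _ q :=
    (p 0).prodMk ((p 1).prodMk ((p 2).prodMk r3))
  have a4 := HasFDerivAt.comp (g := F) q hF.hasFDerivAt a3
  have a5 := ((i3.sub a1).sub a2).sub a4
  have a6 : fderiv ℝ (rho F) q = _ := HasFDerivAt.fderiv a5
  rw [a6]
  simp [mdl]
  ring

lemma mdl_dl (t : ℝ) (p v : E4) : mdl (dl t p) (dl t v) = t ^ 3 * mdl p v := by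
  have key : ∀ (r : ℝ) (z : ℂ), ((r : ℂ) * z).re = r * z.re := by intro r z; simp
  have e1 : (t:ℂ) ^ 2 * v 0 * conj ((t:ℂ) * p 2) + (t:ℂ) ^ 2 * p 0 * conj ((t:ℂ) * v 2)
      = ((t ^ 3 : ℝ) : ℂ) * (v 0 * conj (p 2) + p 0 * conj (v 2)) := by
    simp only [map_mul, Complex.conj_ofReal]; push_cast; ring
  have e2 : (t:ℂ) * v 1 * (conj ((t:ℂ) * p 2)) ^ 2
      + 2 * ((t:ℂ) * p 1) * conj ((t:ℂ) * p 2) * conj ((t:ℂ) * v 2)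
      = ((t ^ 3 : ℝ) : ℂ) * (v 1 * (conj (p 2)) ^ 2 + 2 * p 1 * conj (p 2) * conj (v 2)) := by
    simp only [map_mul, Complex.conj_ofReal]; push_cast; ring
  have e3 : ((t:ℂ) ^ 3 * v 3).im = t ^ 3 * (v 3).im := by
    rw [← Complex.ofReal_pow, Complex.im_ofReal_mul]
  simp only [mdl, dl, Matrix.cons_val_zero, Matrix.cons_val_one, Matrix.cons_val]
  rw [e1, e2, e3, key, key]
  ring

/-- the rescaled vector field -/
def Yf (X : E4 → E4) (y : ℂ × E4) : E4 :=
  ![y.1 * X (dl y.1 y.2) 0, y.1 ^ 2 * X (dl y.1 y.2) 1, y.1 ^ 2 * X (dl y.1 y.2) 2, X (dl y.1 y.2) 3]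

lemma dl_analytic (y : ℂ × E4) : AnalyticAt ℂ (fun y : ℂ × E4 => dl y.1 y.2) y := by
  have h : ∀ i : Fin 4, AnalyticAt ℂ (fun y : ℂ × E4 => y.2 i) y := fun i =>
    ((ContinuousLinearMap.proj (R := ℂ) (φ := fun _ : Fin 4 => ℂ) i).analyticAt _).comp analyticAt_snd
  rw [analyticAt_pi_iff]
  intro i
  fin_cases i
  · exact (analyticAt_fst.pow 2).mul (h 0)
  · exact analyticAt_fst.mul (h 1)
  · exact analyticAt_fst.mul (h 2)
  · exact (analyticAt_fst.pow 3).mul (h 3)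

lemma dl_zero (p : E4) : dl 0 p = 0 := by
  funext i; fin_cases i <;> simp [dl]

lemma Yf_analyticAt (X : E4 → E4) (y : ℂ × E4) (hX : AnalyticAt ℂ X (dl y.1 y.2)) :
    AnalyticAt ℂ (Yf X) y := by
  have h0 : AnalyticAt ℂ (fun y : ℂ × E4 => X (dl y.1 y.2)) y :=
    AnalyticAt.comp (g := X) (f := fun y : ℂ × E4 => dl y.1 y.2) hX (dl_analytic y)
  rw [analyticAt_pi_iff] at h0 ⊢
  intro i
  fin_cases i
  · exact analyticAt_fst.mul (h0 0)
  · exact (analyticAt_fst.pow 2).mul (h0 1)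
  · exact (analyticAt_fst.pow 2).mul (h0 2)
  · exact h0 3

lemma Yf_analytic (X : E4 → E4) (hX : AnalyticAt ℂ X 0) (p : E4) : AnalyticAt ℂ (Yf X) (0, p) :=
  Yf_analyticAt X (0, p) (by simpa only [dl_zero] using hX)

lemma dl_Yf (X : E4 → E4) (t : ℂ) (p : E4) : dl t (Yf X (t, p)) = t ^ 3 • X (dl t p) := by
  funext i; fin_cases i <;> simp [dl, Yf] <;> ring

lemma dl_smul (t c : ℂ) (p : E4) : dl t (c • p) = c • dl t p := by
  funext i; fin_cases i <;> simp [dl] <;> ring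

/-- pointwise convergence of linear functionals against converging vectors -/
lemma lin_tendsto {ι : Type*} {l : Filter ι} (A : ι → (ℂ × ℂ × ℂ × ℝ) →ₗ[ℝ] ℝ)
    (hA : ∀ v, Tendsto (fun i => A i v) l (𝓝 0)) (b : ι → ℂ × ℂ × ℂ × ℝ) (b0 : ℂ × ℂ × ℂ × ℝ)
    (hb : Tendsto b l (𝓝 b0)) : Tendsto (fun i => A i (b i)) l (𝓝 0) := by
  let B := Module.finBasis ℝ (ℂ × ℂ × ℂ × ℝ)
  have h1 : ∀ i, A i (b i) = ∑ k, B.repr (b i) k * A i (B k) := by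
    intro i
    conv_lhs => rw [← B.sum_repr (b i)]
    simp only [map_sum, map_smul, smul_eq_mul]
  simp only [h1]
  have h2 : Tendsto (fun i => ∑ k, B.repr (b i) k * A i (B k)) l (𝓝 (∑ k, B.repr b0 k * 0)) := by
    apply tendsto_finsetSum
    intro k _
    apply Tendsto.mul _ (hA (B k))
    have hc : Continuous (fun x => B.coord k x) := (B.coord k).continuous_of_finiteDimensional
    exact (hc.tendsto b0).comp hb
  simpa using h2

lemma mdl_cont : Continuous (fun y : E4 × E4 => mdl y.1 y.2) := by
  unfold mdl
  fun_prop

lemma tan_limit (F : ℂ × ℂ × ℂ × ℝ → ℝ) (hF : AnalyticAt ℝ F 0)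
    (hs : ∀ᶠ x : ℂ × ℂ × ℂ × ℝ in 𝓝 0,
      Tendsto (fun t : ℝ => F (dr t x) / t ^ 3) (𝓝[≠] (0 : ℝ)) (𝓝 0) ∧
      ∀ v, Tendsto (fun t : ℝ => fderiv ℝ F (dr t x) (dr t v) / t ^ 3) (𝓝[≠] (0 : ℝ)) (𝓝 0))
    (X : E4 → E4) (hX : AnalyticAt ℂ X 0)
    (hT : ∀ᶠ p : E4 in 𝓝 0, p ∈ Gam F → fderiv ℝ (rho F) p (X p) = 0) (n : ℕ)
    (hj : ∀ j < n, ∀ p, (Dt ℂ)^[j] (Yf X) (0, p) = 0) :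
    ∀ᶠ x : ℂ × ℂ × ℂ × ℝ in 𝓝 0,
      mdl (mpt x) (((n.factorial : ℂ)⁻¹) • (Dt ℂ)^[n] (Yf X) (0, mpt x)) = 0 := by
  filter_upwards [hs] with x hx
  obtain ⟨hx1, hx2⟩ := hx
  have hid : Tendsto (fun t : ℝ => t) (𝓝[≠] (0:ℝ)) (𝓝 0) := tendsto_id.mono_left nhdsWithin_le_nhds
  have hne : ∀ᶠ t : ℝ in 𝓝[≠] (0:ℝ), t ≠ 0 := eventually_mem_nhdsWithin
  have hidc : Tendsto (fun t : ℝ => (t : ℂ)) (𝓝[≠] (0:ℝ)) (𝓝 0) := by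
    have := (Complex.continuous_ofReal.tendsto 0).comp hid
    simpa [Function.comp_def] using this
  set pt : ℝ → E4 := fun t => ![x.1, x.2.1, x.2.2.1,
    (x.2.2.2 : ℂ) + ((PP x.1 x.2.1 x.2.2.1 + F (dr t x) / t ^ 3 : ℝ) : ℂ) * I] with hpt
  have hptl : Tendsto pt (𝓝[≠] (0:ℝ)) (𝓝 (mpt x)) := by
    rw [tendsto_pi_nhds]
    intro i
    fin_cases i
    · exact tendsto_const_nhds
    · exact tendsto_const_nhds
    · exact tendsto_const_nhds
    · have h1 : Tendsto (fun t : ℝ => PP x.1 x.2.1 x.2.2.1 + F (dr t x) / t ^ 3) (𝓝[≠] (0:ℝ))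
          (𝓝 (PP x.1 x.2.1 x.2.2.1)) := by
        simpa using hx1.const_add (PP x.1 x.2.1 x.2.2.1)
      exact (((Complex.continuous_ofReal.tendsto _).comp h1).mul_const I).const_add _
  have hql : Tendsto (fun t : ℝ => dl t (pt t)) (𝓝[≠] (0:ℝ)) (𝓝 0) := by
    have h1 := (dl_analytic (0, mpt x)).continuousAt.tendsto.comp (hidc.prodMk_nhds hptl)
    simpa [Function.comp_def, dl_zero] using h1
  have hY := lead_tendsto n (Yf X) (mpt x) (Yf_analytic X hX _)
    (fun j hjn => Filter.Eventually.of_forall (hj j hjn)) (l := 𝓝[≠] (0:ℝ)) (fun t => (t : ℂ)) pt hidc hptl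
    (by filter_upwards [hne] with t ht; exact_mod_cast ht)
  set Z := ((n.factorial : ℂ)⁻¹) • (Dt ℂ)^[n] (Yf X) (0, mpt x) with hZ
  set yt : ℝ → E4 := fun t => (((t : ℂ)) ^ n)⁻¹ • Yf X ((t : ℂ), pt t) with hyt
  have hlim1 : Tendsto (fun t => mdl (pt t) (yt t)) (𝓝[≠] (0:ℝ)) (𝓝 (mdl (mpt x) Z)) :=
    (mdl_cont.tendsto (mpt x, Z)).comp (hptl.prodMk_nhds hY)
  have hpr : Continuous (fun v : E4 => ((v 0, v 1, v 2, (v 3).re) : ℂ × ℂ × ℂ × ℝ)) := by fun_prop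
  have hlim2 : Tendsto (fun t => (fderiv ℝ F (dr t x) (dr t (yt t 0, yt t 1, yt t 2, (yt t 3).re))) / t ^ 3)
      (𝓝[≠] (0:ℝ)) (𝓝 0) := by
    have h1 := lin_tendsto (l := 𝓝[≠] (0:ℝ))
      (fun t => (t ^ 3)⁻¹ • ((fderiv ℝ F (dr t x)).comp (drL t)).toLinearMap)
      (fun v => by
        refine (hx2 v).congr (fun t => ?_)
        simp [drL_apply, div_eq_inv_mul])
      (fun t => (yt t 0, yt t 1, yt t 2, (yt t 3).re)) _ ((hpr.tendsto Z).comp hY)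
    refine h1.congr (fun t => ?_)
    simp [drL_apply, div_eq_inv_mul]
  have hdr : Tendsto (fun t : ℝ => dr t x) (𝓝[≠] (0:ℝ)) (𝓝 0) := by
    have h1 := (dr_analytic (0, x)).continuousAt.tendsto.comp (hid.prodMk_nhds (tendsto_const_nhds (x := x)))
    simpa [Function.comp_def, dr_zero] using h1
  have hzero : ∀ᶠ t in 𝓝[≠] (0:ℝ), mdl (pt t) (yt t) -
      (fderiv ℝ F (dr t x) (dr t (yt t 0, yt t 1, yt t 2, (yt t 3).re))) / t ^ 3 = 0 := by
    filter_upwards [hne, hql.eventually hT, hdr.eventually hF.eventually_analyticAt] with t ht h1 h2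
    have htc : (t : ℂ) ≠ 0 := by exact_mod_cast ht
    have hq : ((dl t (pt t)) 0, (dl t (pt t)) 1, (dl t (pt t)) 2, ((dl t (pt t)) 3).re) = dr t x := by
      have : ((dl t (pt t)) 3).re = t ^ 3 * x.2.2.2 := by
        simp only [dl, hpt, Matrix.cons_val]
        rw [← Complex.ofReal_pow, Complex.re_ofReal_mul]
        simp only [Complex.add_re, Complex.ofReal_re, Complex.mul_re, Complex.I_re, Complex.I_im,
          Complex.ofReal_im]
        ring
      rw [this]
      simp [dl, hpt, dr]
    have hG : dl t (pt t) ∈ Gam F := by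
      show rho F (dl t (pt t)) = 0
      unfold rho
      rw [hq]
      have k1 : ((dl t (pt t)) 3).im = t ^ 3 * (PP x.1 x.2.1 x.2.2.1 + F (dr t x) / t ^ 3) := by
        simp only [dl, hpt, Matrix.cons_val]
        rw [← Complex.ofReal_pow, Complex.im_ofReal_mul]
        simp only [Complex.add_im, Complex.ofReal_re, Complex.mul_im, Complex.I_re, Complex.I_im,
          Complex.ofReal_im]
        ring
      have k2 : ((dl t (pt t)) 0 * conj ((dl t (pt t)) 2)).re = t ^ 3 * (x.1 * conj x.2.2.1).re := by
        rw [← Complex.re_ofReal_mul]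
        congr 1
        simp [dl, hpt]
        ring
      have k3 : ((dl t (pt t)) 1 * (conj ((dl t (pt t)) 2)) ^ 2).re
          = t ^ 3 * (x.2.1 * (conj x.2.2.1) ^ 2).re := by
        rw [← Complex.re_ofReal_mul]
        congr 1
        simp [dl, hpt]
        ring
      rw [k1, k2, k3]
      unfold PP
      field_simp
      ring
    have h3 := h1 hG
    have h2' : DifferentiableAt ℝ F ((dl t (pt t)) 0, (dl t (pt t)) 1, (dl t (pt t)) 2, ((dl t (pt t)) 3).re) := by
      rw [hq]; exact h2.differentiableAt
    set r : ℝ := (t ^ n)⁻¹ * t ^ 3 with hr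
    have hv : dl t (yt t) = r • X (dl t (pt t)) := by
      rw [hyt]
      simp only []
      rw [dl_smul, dl_Yf, smul_smul]
      funext i
      simp [hr]
    have h4 : fderiv ℝ (rho F) (dl t (pt t)) (dl t (yt t)) = 0 := by
      rw [hv, map_smul, h3, smul_zero]
    rw [rho_hasDeriv F _ _ h2', hq, mdl_dl] at h4
    have hv2 : ((dl t (yt t)) 0, (dl t (yt t)) 1, (dl t (yt t)) 2, ((dl t (yt t)) 3).re)
        = dr t (yt t 0, yt t 1, yt t 2, (yt t 3).re) := by
      have : ((dl t (yt t)) 3).re = t ^ 3 * (yt t 3).re := by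
        simp only [dl, Matrix.cons_val]
        rw [← Complex.ofReal_pow, Complex.re_ofReal_mul]
      rw [this]
      simp [dl, dr]
    rw [hv2] at h4
    have ht3 : t ^ 3 ≠ 0 := pow_ne_zero _ ht
    field_simp
    linarith
  have h5 := (hlim1.sub hlim2).congr' hzero
  have h6 := tendsto_nhds_unique h5 tendsto_const_nhds
  simpa using h6

/-- normalized `n`-th Taylor coefficient of the rescaled field -/
noncomputable def Zn (X : E4 → E4) (n : ℕ) (p : E4) : E4 :=
  ((n.factorial : ℂ)⁻¹) • (Dt ℂ)^[n] (Yf X) (0, p)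

lemma Zn_tendsto (X : E4 → E4) (hX : AnalyticAt ℂ X 0) (n : ℕ)
    (hj : ∀ j < n, ∀ p, (Dt ℂ)^[j] (Yf X) (0, p) = 0) (p : E4) (c : ℂ) (hc : c ≠ 0) :
    Tendsto (fun t : ℂ => ((c * t) ^ n)⁻¹ • Yf X (c * t, p)) (𝓝[≠] (0:ℂ)) (𝓝 (Zn X n p)) := by
  have hid : Tendsto (fun t : ℂ => c * t) (𝓝[≠] (0:ℂ)) (𝓝 0) := by
    have h : Continuous (fun t : ℂ => c * t) := by fun_prop
    have := (h.tendsto 0).mono_left (nhdsWithin_le_nhds (s := {0}ᶜ))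
    simpa using this
  have hne : ∀ᶠ t : ℂ in 𝓝[≠] (0:ℂ), c * t ≠ 0 := by
    filter_upwards [eventually_mem_nhdsWithin] with t ht
    exact mul_ne_zero hc ht
  exact lead_tendsto n (Yf X) p (Yf_analytic X hX _)
    (fun j hjn => Filter.Eventually.of_forall (hj j hjn)) (fun t : ℂ => c * t) (fun _ => p) hid
    tendsto_const_nhds hne

lemma Zn_diff (X : E4 → E4) (hX : AnalyticAt ℂ X 0) (n : ℕ) : Differentiable ℂ (Zn X n) := by
  intro p
  have h1 := Dt_iter_analytic (Yf_analytic X hX p) n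
  have h2 : AnalyticAt ℂ (fun p : E4 => (Dt ℂ)^[n] (Yf X) (0, p)) p :=
    AnalyticAt.comp (g := (Dt ℂ)^[n] (Yf X)) (f := fun p : E4 => ((0 : ℂ), p)) h1
      (analyticAt_const.prod analyticAt_id)
  exact (h2.differentiableAt).const_smul ((n.factorial : ℂ)⁻¹)

lemma Zn_homog (X : E4 → E4) (hX : AnalyticAt ℂ X 0) (n : ℕ)
    (hj : ∀ j < n, ∀ p, (Dt ℂ)^[j] (Yf X) (0, p) = 0) (i : Fin 4) (k : ℕ)
    (hk : ∀ t p, (2:ℂ) ^ k * Yf X (t, dl 2 p) i = Yf X (2 * t, p) i) (p : E4) :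
    (2:ℂ) ^ k * Zn X n (dl 2 p) i = 2 ^ n * Zn X n p i := by
  have h1 := Zn_tendsto X hX n hj (dl 2 p) 1 one_ne_zero
  have h2 := Zn_tendsto X hX n hj p 2 two_ne_zero
  rw [tendsto_pi_nhds] at h1 h2
  have h1' := (h1 i).const_mul ((2:ℂ) ^ k)
  have h2' := (h2 i).const_mul ((2:ℂ) ^ n)
  refine tendsto_nhds_unique h1' (h2'.congr' ?_)
  filter_upwards [eventually_mem_nhdsWithin] with t ht
  have ht' : t ≠ 0 := ht
  simp only [one_mul, Pi.smul_apply, smul_eq_mul]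
  rw [← hk t p]
  rw [mul_pow]
  field_simp

lemma dl_dl (s t : ℂ) (p : E4) : dl s (dl t p) = dl (s * t) p := by
  funext i; fin_cases i <;> simp [dl] <;> ring

lemma Dt_zero_of_Zn (X : E4 → E4) (n : ℕ) (p : E4) (h : Zn X n p = 0) :
    (Dt ℂ)^[n] (Yf X) (0, p) = 0 := by
  unfold Zn at h
  rcases smul_eq_zero.1 h with h | h
  · exact absurd h (inv_ne_zero (by exact_mod_cast Nat.factorial_ne_zero n))
  · exact h

/-- vanishing jets force all Taylor coefficients to vanish -/
lemma all_zero (F : ℂ × ℂ × ℂ × ℝ → ℝ) (hF : AnalyticAt ℝ F 0)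
    (hs : ∀ᶠ x : ℂ × ℂ × ℂ × ℝ in 𝓝 0,
      Tendsto (fun t : ℝ => F (dr t x) / t ^ 3) (𝓝[≠] (0 : ℝ)) (𝓝 0) ∧
      ∀ v, Tendsto (fun t : ℝ => fderiv ℝ F (dr t x) (dr t v) / t ^ 3) (𝓝[≠] (0 : ℝ)) (𝓝 0))
    (X : E4 → E4) (hX : AnalyticAt ℂ X 0)
    (hT : ∀ᶠ p : E4 in 𝓝 0, p ∈ Gam F → fderiv ℝ (rho F) p (X p) = 0)
    (j0 : (X 0 3).re = 0) (j1 : X 0 0 = 0) (j2 : X 0 1 = 0) (j3 : X 0 2 = 0)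
    (k1 : (Zn X 2 ez 0).im = 0) (k2 : Zn X 3 ez 0 = 0) (k3 : Zn X 3 ez 2 = 0)
    (k4 : (Zn X 3 ew 3).re = 0) (k5 : (Zn X 4 ez 1).im = 0) (k6 : Zn X 4 ew 0 = 0) :
    ∀ n p, (Dt ℂ)^[n] (Yf X) (0, p) = 0 := by
  intro n
  induction n using Nat.strong_induction_on with
  | _ n hj =>
    have hd0 : ∀ t : ℂ, dl t 0 = 0 := by
      intro t; funext i; fin_cases i <;> simp [dl]
    have hz : ∀ i : Fin 4, X 0 i = 0 → Zn X n 0 i = 0 := by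
      intro i hi
      have h1 := Zn_tendsto X hX n hj 0 1 one_ne_zero
      rw [tendsto_pi_nhds] at h1
      refine tendsto_nhds_unique (h1 i) ((tendsto_const_nhds (x := (0:ℂ))).congr (fun t => ?_))
      fin_cases i <;> simp only [Fin.zero_eta, Fin.mk_one, Fin.reduceFinMk] at hi <;>
        simp [Yf, hd0, hi]
    have hker := kill (Zn X n) (Zn_diff X hX n) (tan_limit F hF hs X hX hT n hj) n
      (fun p => by
        have := Zn_homog X hX n hj 0 1 (fun t p => by
          simp only [Yf, dl_dl, Matrix.cons_val_zero, mul_comm t 2]; ring) p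
        simpa using this)
      (Zn_homog X hX n hj 1 2 (fun t p => by
          simp only [Yf, dl_dl, Matrix.cons_val_one, Matrix.cons_val, mul_comm t 2]; ring))
      (Zn_homog X hX n hj 2 2 (fun t p => by
          simp only [Yf, dl_dl, Matrix.cons_val, mul_comm t 2]; ring))
      (fun p => by
        have := Zn_homog X hX n hj 3 0 (fun t p => by
          simp only [Yf, dl_dl, Matrix.cons_val, mul_comm t 2]; ring) p
        simpa using this)
      (fun h => by
        subst h
        simpa [Zn, Yf, hd0] using j0)
      (fun _ => hz 0 j1)
      (fun h => ⟨hz 1 j2, hz 2 j3, by subst h; exact k1⟩)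
      (fun h => by subst h; exact ⟨k2, k3, k4⟩)
      (fun h => by subst h; exact ⟨k5, k6⟩)
    intro p
    exact Dt_zero_of_Zn X n p (hker p)

lemma flat_zero (X : E4 → E4) (hX : AnalyticAt ℂ X 0)
    (h : ∀ n p, (Dt ℂ)^[n] (Yf X) (0, p) = 0) : X =ᶠ[𝓝 0] 0 := by
  have hU : ∀ᶠ p in 𝓝 (0:E4), ∀ t ∈ Metric.closedBall (0:ℂ) 2, AnalyticAt ℂ X (dl t p) := by
    obtain ⟨ε, hε, hb⟩ := Metric.eventually_nhds_iff_ball.1 hX.eventually_analyticAt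
    filter_upwards [Metric.ball_mem_nhds (0:E4) (show (0:ℝ) < ε / 8 by positivity)] with p hp t ht
    apply hb
    have ht' : ‖t‖ ≤ 2 := by simpa using ht
    have hp' : ‖p‖ < ε / 8 := by simpa using hp
    have hpi : ∀ i, ‖p i‖ < ε / 8 := fun i => lt_of_le_of_lt (norm_le_pi_norm p i) hp'
    rw [mem_ball_zero_iff, pi_norm_lt_iff hε]
    have hpow : ∀ k : ℕ, k ≤ 3 → ∀ z : ℂ, ‖z‖ < ε / 8 → ‖t ^ k * z‖ < ε := by
      intro k hk z hz
      rw [norm_mul, norm_pow]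
      have a1 : ‖t‖ ^ k ≤ 2 ^ k := pow_le_pow_left₀ (norm_nonneg t) ht' k
      have a2 : (2:ℝ) ^ k ≤ 2 ^ 3 := pow_le_pow_right₀ (by norm_num) hk
      have a3 : ‖t‖ ^ k * ‖z‖ ≤ 8 * ‖z‖ :=
        mul_le_mul_of_nonneg_right (by linarith) (norm_nonneg z)
      linarith
    intro i
    fin_cases i
    · exact hpow 2 (by norm_num) _ (hpi 0)
    · simpa [dl] using hpow 1 (by norm_num) _ (hpi 1)
    · simpa [dl] using hpow 1 (by norm_num) _ (hpi 2)
    · exact hpow 3 (by norm_num) _ (hpi 3)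
  filter_upwards [hU] with p hp
  have hya : ∀ t ∈ Metric.ball (0:ℂ) 2, AnalyticAt ℂ (fun t : ℂ => Yf X (t, p)) t := by
    intro t ht
    exact AnalyticAt.comp (g := Yf X) (f := fun t : ℂ => (t, p))
      (Yf_analyticAt X (t, p) (hp t (Metric.ball_subset_closedBall ht)))
      (analyticAt_id.prod analyticAt_const)
  have h0 : (0:ℂ) ∈ Metric.ball (0:ℂ) 2 := by simp
  have hnear : (fun t : ℂ => Yf X (t, p)) =ᶠ[𝓝 0] 0 := by
    by_contra hcon
    obtain ⟨n, g, hg, hg0, hgn⟩ := ((hya 0 h0).exists_eventuallyEq_pow_smul_nonzero_iff).2 hcon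
    have h1 := Zn_tendsto X hX n (fun j _ p => h j p) p 1 one_ne_zero
    have h2 : Zn X n p = 0 := by simp [Zn, h n p]
    rw [h2] at h1
    have h3 : Tendsto g (𝓝[≠] (0:ℂ)) (𝓝 (g 0)) := hg.continuousAt.tendsto.mono_left nhdsWithin_le_nhds
    apply hg0
    refine tendsto_nhds_unique h3 (h1.congr' ?_)
    filter_upwards [hgn.filter_mono nhdsWithin_le_nhds, eventually_mem_nhdsWithin] with t ht ht0
    have ht0' : t ≠ 0 := ht0
    rw [one_mul, ht, sub_zero, smul_smul, inv_mul_cancel₀ (pow_ne_zero _ ht0'), one_smul]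
  have hid := AnalyticOnNhd.eqOn_zero_of_preconnected_of_eventuallyEq_zero
    (f := fun t : ℂ => Yf X (t, p)) (U := Metric.ball (0:ℂ) 2) hya
    (convex_ball (0:ℂ) 2).isPreconnected h0 hnear
  have h1 := hid (show (1:ℂ) ∈ Metric.ball (0:ℂ) 2 by simp)
  have hd1 : dl 1 p = p := by funext i; fin_cases i <;> simp [dl]
  funext i
  have h2 := congrFun h1 i
  fin_cases i <;> simpa [Yf, hd1] using h2


lemma Zn_congr {X X' : E4 → E4} (h : X =ᶠ[𝓝 0] X') (n : ℕ) (p : E4) : Zn X n p = Zn X' n p := by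
  have h1 : Yf X =ᶠ[𝓝 ((0:ℂ), p)] Yf X' := by
    have h2 := (dl_analytic (0, p)).continuousAt.tendsto
    simp only [dl_zero] at h2
    filter_upwards [h2.eventually h] with y hy
    simp only [Yf, hy]
  unfold Zn
  rw [(Dt_iter_congr h1 n).eq_of_nhds]

lemma Zn_add {X X' : E4 → E4} (h : AnalyticAt ℂ X 0) (h' : AnalyticAt ℂ X' 0) (n : ℕ) (p : E4) :
    Zn (X + X') n p = Zn X n p + Zn X' n p := by
  have h1 : Yf (X + X') = fun y => Yf X y + Yf X' y := by
    funext y i; fin_cases i <;> simp [Yf] <;> ring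
  unfold Zn
  rw [h1, (Dt_iter_add (Yf_analytic X h p) (Yf_analytic X' h' p) n).eq_of_nhds, smul_add]

lemma Zn_smul {X : E4 → E4} (h : AnalyticAt ℂ X 0) (c : ℂ) (n : ℕ) (p : E4) :
    Zn (c • X) n p = c • Zn X n p := by
  have h1 : Yf (c • X) = fun y => c • Yf X y := by
    funext y i; fin_cases i <;> simp [Yf] <;> ring
  unfold Zn
  rw [h1, (Dt_iter_smul (Yf_analytic X h p) c n).eq_of_nhds, smul_comm]

/-- first group of jet coordinates (values at the origin) -/
noncomputable def J1 (X : E4 → E4) : ℝ × ℂ × ℂ × ℂ := ((X 0 3).re, X 0 0, X 0 1, X 0 2)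

/-- second group of jet coordinates -/
noncomputable def J2 (X : E4 → E4) : ℝ × ℂ × ℂ × ℝ × ℝ × ℂ :=
  ((Zn X 2 ez 0).im, Zn X 3 ez 0, Zn X 3 ez 2, (Zn X 3 ew 3).re, (Zn X 4 ez 1).im, Zn X 4 ew 0)

/-- a vector field as a tuple of germs -/
noncomputable def germs (X : E4 → E4) : G4 × G4 × G4 × G4 :=
  (((fun p => X p 0 : E4 → ℂ) : G4), ((fun p => X p 1 : E4 → ℂ) : G4),
    ((fun p => X p 2 : E4 → ℂ) : G4), ((fun p => X p 3 : E4 → ℂ) : G4))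

lemma germs_inj {X X' : E4 → E4} (h : germs X = germs X') : X =ᶠ[𝓝 0] X' := by
  simp only [germs, Prod.mk.injEq, Filter.Germ.coe_eq] at h
  obtain ⟨h0, h1, h2, h3⟩ := h
  filter_upwards [h0, h1, h2, h3] with p a0 a1 a2 a3
  funext i
  fin_cases i
  · exact a0
  · exact a1
  · exact a2
  · exact a3

lemma germs_add (X X' : E4 → E4) : germs (X + X') = germs X + germs X' := rfl

lemma germs_smul (c : ℝ) (X : E4 → E4) : germs ((c : ℂ) • X) = c • germs X := by
  have h : ((c : ℂ) • X) = c • X := by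
    funext p i; simp
  rw [h]
  rfl

lemma germs_zero : germs 0 = 0 := rfl

lemma rank_bound {V : Type} [AddCommGroup V] [Module ℝ V] [Module.Finite ℝ V]
    (W : Submodule ℝ (G4 × G4 × G4 × G4)) (J : (E4 → E4) → V)
    (Pr : (E4 → E4) → Prop)
    (hW : ∀ w ∈ W, ∃ X, AnalyticAt ℂ X 0 ∧ Pr X ∧ w = germs X)
    (hc : ∀ X X', X =ᶠ[𝓝 0] X' → J X = J X')
    (ha : ∀ X X', AnalyticAt ℂ X 0 → AnalyticAt ℂ X' 0 → J (X + X') = J X + J X')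
    (hm : ∀ (c : ℝ) X, AnalyticAt ℂ X 0 → J ((c : ℂ) • X) = c • J X)
    (hi : ∀ X, AnalyticAt ℂ X 0 → Pr X → J X = 0 → X =ᶠ[𝓝 0] 0) :
    Module.rank ℝ W ≤ (Module.finrank ℝ V : Cardinal) := by
  choose R hR1 hR2 hR3 using hW
  let L : W →ₗ[ℝ] V :=
    { toFun := fun w => J (R w.1 w.2)
      map_add' := by
        intro a b
        rw [← ha _ _ (hR1 _ _) (hR1 _ _)]
        apply hc
        apply germs_inj
        rw [← hR3, germs_add, ← hR3, ← hR3]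
        rfl
      map_smul' := by
        intro c a
        rw [RingHom.id_apply, ← hm _ _ (hR1 _ _)]
        apply hc
        apply germs_inj
        rw [← hR3, germs_smul, ← hR3]
        rfl }
  have hL : Function.Injective L := by
    rw [← LinearMap.ker_eq_bot, LinearMap.ker_eq_bot']
    intro w hw
    have h1 := hi _ (hR1 w.1 w.2) (hR2 w.1 w.2) hw
    apply Subtype.ext
    rw [hR3 w.1 w.2]
    have h2 : R w.1 w.2 =ᶠ[𝓝 0] (0 : E4 → E4) := h1
    show germs _ = germs 0
    simp only [germs, Prod.mk.injEq, Filter.Germ.coe_eq]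
    refine ⟨?_, ?_, ?_, ?_⟩ <;> filter_upwards [h2] with p hp <;> rw [hp]
  rw [Module.finrank_eq_rank]
  exact LinearMap.rank_le_of_injective L hL

lemma J1_congr {X X' : E4 → E4} (h : X =ᶠ[𝓝 0] X') : J1 X = J1 X' := by
  simp only [J1, h.eq_of_nhds]

lemma J2_congr {X X' : E4 → E4} (h : X =ᶠ[𝓝 0] X') : J2 X = J2 X' := by
  simp only [J2, Zn_congr h]

lemma J1_add (X X' : E4 → E4) : J1 (X + X') = J1 X + J1 X' := by
  simp [J1]

lemma J2_add {X X' : E4 → E4} (h : AnalyticAt ℂ X 0) (h' : AnalyticAt ℂ X' 0) :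
    J2 (X + X') = J2 X + J2 X' := by
  simp [J2, Zn_add h h']

lemma J1_smul (c : ℝ) (X : E4 → E4) : J1 ((c : ℂ) • X) = c • J1 X := by
  simp [J1]

lemma J2_smul (c : ℝ) {X : E4 → E4} (h : AnalyticAt ℂ X 0) : J2 ((c : ℂ) • X) = c • J2 X := by
  simp only [J2, Zn_smul h]
  simp

lemma field_of (f g h e : E4 → ℂ) (hf : AnalyticAt ℂ f 0) (hg : AnalyticAt ℂ g 0)
    (hh : AnalyticAt ℂ h 0) (he : AnalyticAt ℂ e 0) :
    AnalyticAt ℂ (fun p => (![f p, g p, h p, e p] : E4)) 0 := by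
  rw [analyticAt_pi_iff]
  intro i
  fin_cases i
  · exact hf
  · exact hg
  · exact hh
  · exact he

theorem stmt_11 (F : ℂ × ℂ × ℂ × ℝ → ℝ) (hF : AnalyticAt ℝ F 0)
    (hF4 : ∀ᶠ x : ℂ × ℂ × ℂ × ℝ in 𝓝 0,
      Tendsto (fun t : ℝ =>
          F ((t : ℂ) ^ 2 * x.1, (t : ℂ) * x.2.1, (t : ℂ) * x.2.2.1, t ^ 3 * x.2.2.2) / t ^ 3)
        (𝓝[≠] (0 : ℝ)) (𝓝 0)) :
    (∀ W : Submodule ℝ (G4 × G4 × G4 × G4),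
      (W : Set (G4 × G4 × G4 × G4)) ⊆ tangentGerms F → Module.rank ℝ ↥W ≤ 16) ∧
    (∀ W : Submodule ℝ (G4 × G4 × G4 × G4),
      (W : Set (G4 × G4 × G4 × G4)) ⊆ tangentGerms0 F → Module.rank ℝ ↥W ≤ 9) := by
  have hs := F_small F hF hF4
  constructor
  · intro W hW
    have h1 := rank_bound W (fun X => (J1 X, J2 X))
      (fun X => ∀ᶠ p : E4 in 𝓝 0, p ∈ Gam F → fderiv ℝ (rho F) p (X p) = 0)
      (by
        intro w hw
        obtain ⟨f, g, h, e, ht, hf, hg, hh, he, hT⟩ := hW hw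
        exact ⟨fun p => ![f p, g p, h p, e p], field_of f g h e hf hg hh he, hT, ht⟩)
      (fun X X' h => by simp only [J1_congr h, J2_congr h])
      (fun X X' h h' => by simp only [J1_add, J2_add h h', Prod.mk_add_mk])
      (fun c X h => by simp only [J1_smul, J2_smul c h, Prod.smul_mk])
      (fun X hX hT hJ => by
        simp only [J1, J2, Prod.mk_eq_zero] at hJ
        obtain ⟨⟨a0, a1, a2, a3⟩, b1, b2, b3, b4, b5, b6⟩ := hJ
        exact flat_zero X hX (all_zero F hF hs X hX hT a0 a1 a2 a3 b1 b2 b3 b4 b5 b6))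
    refine h1.trans (le_of_eq ?_)
    simp only [Module.finrank_prod, Module.finrank_self, Complex.finrank_real_complex]
    norm_num
  · intro W hW
    have h1 := rank_bound W J2
      (fun X => X 0 = 0 ∧ ∀ᶠ p : E4 in 𝓝 0, p ∈ Gam F → fderiv ℝ (rho F) p (X p) = 0)
      (by
        intro w hw
        obtain ⟨f, g, h, e, ht, f0, g0, h0, e0, hf, hg, hh, he, hT⟩ := hW hw
        refine ⟨fun p => ![f p, g p, h p, e p], field_of f g h e hf hg hh he, ⟨?_, hT⟩, ht⟩
        funext i
        fin_cases i
        · exact f0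
        · exact g0
        · exact h0
        · exact e0)
      (fun X X' h => J2_congr h)
      (fun X X' h h' => J2_add h h')
      (fun c X h => J2_smul c h)
      (fun X hX hT hJ => by
        obtain ⟨hX0, hT⟩ := hT
        simp only [J2, Prod.mk_eq_zero] at hJ
        obtain ⟨b1, b2, b3, b4, b5, b6⟩ := hJ
        exact flat_zero X hX (all_zero F hF hs X hX hT (by simp [hX0]) (by simp [hX0])
          (by simp [hX0]) (by simp [hX0]) b1 b2 b3 b4 b5 b6))
    refine h1.trans (le_of_eq ?_)
    simp only [Module.finrank_prod, Module.finrank_self, Complex.finrank_real_complex]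
    norm_num
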